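/- arXiv:1002.2957 — 2 statements merged into one kernel-verified Lean document; each statement's English description precedes it below -/
import Mathlib

section
/- Let y_1, y_2, y_3 ∈ ℝ² be non-collinear, T their closed convex hull, r ∈ [1,∞), and let X_1, X_2 be i.i.d. uniform on T. Then the edge probability of the underlying graph, p_or(r) := P(X_2 ∈ N_PE^r(X_1) or X_1 ∈ N_PE^r(X_2)), is given by: p_or(r) = (47r⁶ − 195r⁵ + 860r⁴ − 846r³ − 108r² + 720r − 256)/(108 r² (r+2)(r+1)) for r ∈ [1, 4/3); p_or(r) = (175r⁵ − 579r⁴ + 1450r³ − 732r² − 536r + 672)/(216 r (r+2)(r+1)) for r ∈ [4/3, 3/2); p_or(r) = −(3r⁸ − 7r⁷ − 30r⁶ + 84r⁵ − 264r⁴ + 304r³ + 144r² − 368r + 96)/(8 r⁴ (r+2)(r+1)) for r ∈ [3/2, 2); and p_or(r) = (r⁵ + r⁴ − 6r + 2)/(r⁴ (r+1)) for r ∈ [2, ∞). In particular p_or(1) = 37/108. -/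
/-!
The edge probability is computed through its complement. Vertex regions are described by barycentric
coordinates: `R(y i)` consists of the points of the triangle whose `i`-th coordinate is the largest
(`mem_vertexRegion_iff`). Since `1 ≤ r`, two points in the same vertex region are always adjacent,
so up to a null set the non-adjacent pairs `(x, z)` split into six sets, one for each ordered pair
`i ≠ j`, with `x` in the region of `y i` and `z` in that of `y j` (`adjacent_iff`).

Barycentric coordinates push Lebesgue measure on the simplex `a, b ≥ 0`, `a + b ≤ 1`, doubled, to the
uniform distribution (`unif_eq_map`), so by symmetry all six sets have probability four times the
volume of one set of coordinates `((p, q), (t, s))`, where `p`, `q` are the coordinates of `x` and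
`t`, `s` those of `z` with respect to `y i`, `y j`. For fixed `q` and `t` the conditions on `p` and
on `s` decouple, and each of them describes an interval. With `slice r q t` and `slice r t q` their
lengths, the volume is the integral of `slice r q t * slice r t q` over `q, t ≥ 0`, which by the
symmetry `q ↔ t` is `2 * halfInt r` (`volume_farSet_eq`). Hence the edge probability is
`1 - 48 * halfInt r` (`por_eq`).

The integrand of `halfInt r` is a combination of three products of a positive part of a piecewise
linear function with a piecewise linear function (`slice_mul_slice`). Each product is integrated
exactly over finitely many pieces (`integral_piece`); how the pieces fit together depends on the
position of `r` relative to `4 / 3`, `3 / 2` and `2` (`halfInt_1`, …, `halfInt_4`).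
-/

open MeasureTheory ProbabilityTheory Filter Topology
open scoped Classical

noncomputable section

/-- The planar cross product / determinant of two vectors in `ℝ²`. -/
def det2 (u v : ℝ × ℝ) : ℝ := u.1 * v.2 - u.2 * v.1

/-- The triangle (closed convex hull) spanned by three points of `ℝ²`. -/
def triangle (y : Fin 3 → ℝ × ℝ) : Set (ℝ × ℝ) := convexHull ℝ {y 0, y 1, y 2}

/-- The barycentric coordinate with respect to the vertex `y i` of the triangle with
vertices `y 0, y 1, y 2` (so `bary y i (y i) = 1` and `bary y i` vanishes on the edge
opposite `y i`). -/
def bary (y : Fin 3 → ℝ × ℝ) (i : Fin 3) (z : ℝ × ℝ) : ℝ :=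
  det2 (z - y (i + 1)) (y (i + 2) - y (i + 1)) /
    det2 (y i - y (i + 1)) (y (i + 2) - y (i + 1))

/-- The vertex region `R(y i)`: the convex hull of `y i`, the midpoints of the two
edges incident to `y i`, and the center of mass of the triangle. -/
def vertexRegion (y : Fin 3 → ℝ × ℝ) (i : Fin 3) : Set (ℝ × ℝ) :=
  convexHull ℝ {y i, midpoint ℝ (y i) (y (i + 1)), midpoint ℝ (y i) (y (i + 2)),
    (3 : ℝ)⁻¹ • (y 0 + y 1 + y 2)}

/-- The vertex of smallest index whose vertex region contains `x`. -/
def vtx (y : Fin 3 → ℝ × ℝ) (x : ℝ × ℝ) : Fin 3 :=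
  if x ∈ vertexRegion y 0 then 0 else if x ∈ vertexRegion y 1 then 1 else 2

/-- The proportional-edge proximity region `N_PE^r(x)` in the triangle with vertices
`y 0, y 1, y 2`:  `{z ∈ T : 1 − b_{v(x)}(z) ≤ r (1 − b_{v(x)}(x))}` for non-vertex `x`,
and `{x}` for a vertex `x`. -/
def NPE (y : Fin 3 → ℝ × ℝ) (r : ℝ) (x : ℝ × ℝ) : Set (ℝ × ℝ) :=
  if x = y 0 ∨ x = y 1 ∨ x = y 2 then {x}
  else {z ∈ triangle y | 1 - bary y (vtx y x) z ≤ r * (1 - bary y (vtx y x) x)}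

/-- The uniform distribution on the triangle with vertices `y 0, y 1, y 2`. -/
def unif (y : Fin 3 → ℝ × ℝ) : Measure (ℝ × ℝ) :=
  (volume (triangle y))⁻¹ • volume.restrict (triangle y)


/-! ### Integrals of products of linear functions -/

lemma integral_zero_pos_part_mul {g h : ℝ → ℝ} (hg : Continuous g) (hh : Continuous h) {c q : ℝ}
    (hc : 0 ≤ c) (hcq : c ≤ q) (h1 : ∀ t, 0 ≤ t → t ≤ c → 0 ≤ g t)
    (h2 : ∀ t, c < t → t ≤ q → g t ≤ 0) :
    ∫ t in (0:ℝ)..q, max (g t) 0 * h t = ∫ t in (0:ℝ)..c, g t * h t := by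
  have hcont : Continuous fun t => max (g t) 0 * h t := by fun_prop
  rw [← intervalIntegral.integral_add_adjacent_intervals (b := c)
    (hcont.intervalIntegrable _ _) (hcont.intervalIntegrable _ _)]
  have e1 : ∫ t in (0:ℝ)..c, max (g t) 0 * h t = ∫ t in (0:ℝ)..c, g t * h t := by
    apply intervalIntegral.integral_congr
    intro t ht
    rw [Set.uIcc_of_le hc] at ht
    simp only [max_eq_left (h1 t ht.1 ht.2)]
  have e2 : ∫ t in c..q, max (g t) 0 * h t = 0 := by
    apply intervalIntegral.integral_zero_ae
    refine Eventually.of_forall fun t ht => ?_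
    rw [Set.uIoc_of_le hcq] at ht
    simp only [max_eq_right (h2 t ht.1 ht.2), zero_mul]
  rw [e1, e2, add_zero]

lemma integral_zero_linear_mul (α β a b x : ℝ) :
    ∫ t in (0:ℝ)..x, (α + a * t) * (β + b * t)
      = α * β * x + (α * b + a * β) * x ^ 2 / 2 + a * b * x ^ 3 / 3 := by
  have : ∀ t ∈ Set.uIcc 0 x, HasDerivAt
      (fun x : ℝ => α * β * x + (α * b + a * β) * x ^ 2 / 2 + a * b * x ^ 3 / 3)
      ((α + a * t) * (β + b * t)) t := by
    intro t _
    have h1 := ((hasDerivAt_id t).const_mul (α * β)).add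
      ((((hasDerivAt_pow 2 t).const_mul (α * b + a * β)).div_const 2).add
      (((hasDerivAt_pow 3 t).const_mul (a * b)).div_const 3))
    refine (h1.congr_deriv ?_).congr_of_eventuallyEq (Eventually.of_forall fun s => ?_)
    · simp; ring
    · simp; ring
  rw [intervalIntegral.integral_eq_sub_of_hasDerivAt this
    ((by fun_prop : Continuous fun t => (α + a * t) * (β + b * t)).intervalIntegrable _ _)]
  ring

lemma integral_cubic (k₀ k₁ k₂ k₃ a b : ℝ) :
    ∫ q in a..b, (k₀ + k₁ * q + k₂ * q ^ 2 + k₃ * q ^ 3)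
      = k₀ * (b - a) + k₁ * (b ^ 2 - a ^ 2) / 2 + k₂ * (b ^ 3 - a ^ 3) / 3
        + k₃ * (b ^ 4 - a ^ 4) / 4 := by
  have : ∀ t ∈ Set.uIcc a b, HasDerivAt
      (fun x : ℝ => k₀ * x + (k₁ * x ^ 2 / 2 + (k₂ * x ^ 3 / 3 + k₃ * x ^ 4 / 4)))
      (k₀ + k₁ * t + k₂ * t ^ 2 + k₃ * t ^ 3) t := by
    intro t _
    have h1 := ((hasDerivAt_id t).const_mul k₀).add
      ((((hasDerivAt_pow 2 t).const_mul k₁).div_const 2).add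
      ((((hasDerivAt_pow 3 t).const_mul k₂).div_const 3).add
      (((hasDerivAt_pow 4 t).const_mul k₃).div_const 4)))
    refine (h1.congr_deriv ?_).congr_of_eventuallyEq (Eventually.of_forall fun s => ?_)
    · simp; ring
    · simp
  rw [intervalIntegral.integral_eq_sub_of_hasDerivAt this
    ((by fun_prop : Continuous fun q => k₀ + k₁ * q + k₂ * q ^ 2 + k₃ * q ^ 3).intervalIntegrable
      _ _)]
  ring

/-- The integral of `(a₀ + a₁ q + a₂ t) (b₀ + b₁ q + b₂ t)` over `0 ≤ t ≤ m q + c`. -/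
def innerVal (a₀ a₁ a₂ b₀ b₁ b₂ m c q : ℝ) : ℝ :=
  (a₀ + a₁ * q) * (b₀ + b₁ * q) * (m * q + c)
    + ((a₀ + a₁ * q) * b₂ + a₂ * (b₀ + b₁ * q)) * (m * q + c) ^ 2 / 2
    + a₂ * b₂ * (m * q + c) ^ 3 / 3

/-- Simpson's rule for `innerVal` on `[a, b]`; it is exact since `innerVal` is cubic in `q`. -/
def outerVal (a₀ a₁ a₂ b₀ b₁ b₂ m c a b : ℝ) : ℝ :=
  (b - a) / 6 * (innerVal a₀ a₁ a₂ b₀ b₁ b₂ m c a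
    + 4 * innerVal a₀ a₁ a₂ b₀ b₁ b₂ m c ((a + b) / 2) + innerVal a₀ a₁ a₂ b₀ b₁ b₂ m c b)

lemma integral_innerVal (a₀ a₁ a₂ b₀ b₁ b₂ m c a b : ℝ) :
    ∫ q in a..b, innerVal a₀ a₁ a₂ b₀ b₁ b₂ m c q = outerVal a₀ a₁ a₂ b₀ b₁ b₂ m c a b := by
  have : ∀ q, innerVal a₀ a₁ a₂ b₀ b₁ b₂ m c q =
      (a₀ * b₀ * c + (a₀ * b₂ + a₂ * b₀) * c ^ 2 / 2 + a₂ * b₂ * c ^ 3 / 3)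
      + (a₀ * b₀ * m + (a₀ * b₁ + a₁ * b₀) * c + (a₀ * b₂ + a₂ * b₀) * m * c
        + (a₁ * b₂ + a₂ * b₁) * c ^ 2 / 2 + a₂ * b₂ * m * c ^ 2) * q
      + ((a₀ * b₁ + a₁ * b₀) * m + a₁ * b₁ * c + (a₀ * b₂ + a₂ * b₀) * m ^ 2 / 2
        + (a₁ * b₂ + a₂ * b₁) * m * c + a₂ * b₂ * m ^ 2 * c) * q ^ 2
      + (a₁ * b₁ * m + (a₁ * b₂ + a₂ * b₁) * m ^ 2 / 2 + a₂ * b₂ * m ^ 3 / 3) * q ^ 3 := by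
    intro q; unfold innerVal; ring
  simp_rw [this]
  rw [integral_cubic]
  unfold outerVal innerVal
  ring

/-- A positive part `max G 0` of a linear function that is positive exactly below the line
`t = m q + c` is integrated, against another linear function `H`, over
`a ≤ q ≤ b`, `0 ≤ t ≤ q`. -/
lemma integral_piece {G H : ℝ → ℝ → ℝ} (a₀ a₁ a₂ b₀ b₁ b₂ m c : ℝ) {a b : ℝ} (hab : a ≤ b)
    (hG : ∀ q t, a ≤ q → q ≤ b → 0 ≤ t → t ≤ q → G q t = a₀ + a₁ * q + a₂ * t)
    (hH : ∀ q t, a ≤ q → q ≤ b → 0 ≤ t → t ≤ q → H q t = b₀ + b₁ * q + b₂ * t)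
    (h0 : ∀ q, a ≤ q → q ≤ b → 0 ≤ m * q + c)
    (hq : ∀ q, a ≤ q → q ≤ b → m * q + c ≤ q)
    (h1 : ∀ q t, a ≤ q → q ≤ b → 0 ≤ t → t ≤ m * q + c → 0 ≤ a₀ + a₁ * q + a₂ * t)
    (h2 : ∀ q t, a ≤ q → q ≤ b → m * q + c < t → t ≤ q → a₀ + a₁ * q + a₂ * t ≤ 0) :
    ∫ q in a..b, ∫ t in (0:ℝ)..q, max (G q t) 0 * H q t
      = outerVal a₀ a₁ a₂ b₀ b₁ b₂ m c a b := by
  rw [← integral_innerVal]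
  apply intervalIntegral.integral_congr
  intro q hqm
  rw [Set.uIcc_of_le hab] at hqm
  obtain ⟨hqa, hqb⟩ := hqm
  have h0q := (h0 q hqa hqb).trans (hq q hqa hqb)
  have e1 : ∫ t in (0:ℝ)..q, max (G q t) 0 * H q t
      = ∫ t in (0:ℝ)..q, max ((a₀ + a₁ * q) + a₂ * t) 0 * ((b₀ + b₁ * q) + b₂ * t) := by
    apply intervalIntegral.integral_congr
    intro t ht
    rw [Set.uIcc_of_le h0q] at ht
    simp only [hG q t hqa hqb ht.1 ht.2, hH q t hqa hqb ht.1 ht.2]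
  simp only
  rw [e1, integral_zero_pos_part_mul (by fun_prop) (by fun_prop) (h0 q hqa hqb) (hq q hqa hqb)
    (fun t => h1 q t hqa hqb) (fun t => h2 q t hqa hqb), integral_zero_linear_mul]
  rfl

lemma integral_piece_zero {G H : ℝ → ℝ → ℝ} {a b : ℝ} (ha : 0 ≤ a) (hab : a ≤ b)
    (hG : ∀ q t, a ≤ q → q ≤ b → 0 ≤ t → t ≤ q → G q t ≤ 0) :
    ∫ q in a..b, ∫ t in (0:ℝ)..q, max (G q t) 0 * H q t = 0 := by
  rw [intervalIntegral.integral_congr (g := fun _ => (0:ℝ))]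
  · simp
  intro q hqm
  rw [Set.uIcc_of_le hab] at hqm
  simp only
  rw [intervalIntegral.integral_congr (g := fun _ => (0:ℝ))]
  · simp
  intro t ht
  rw [Set.uIcc_of_le (ha.trans hqm.1)] at ht
  simp only [max_eq_right (hG q t hqm.1 hqm.2 ht.1 ht.2), zero_mul]

/-! ### The slices and the integral of their product -/

/-- For `q, t ≥ 0` the (nonnegative part of the) length of the set of `p` such that the point with
barycentric coordinates `(p, q, 1 - p - q)` lies in the triangle, has `p` as its largest
coordinate, and satisfies `r (1 - p) < 1 - t`. -/
def slice (r q t : ℝ) : ℝ := max 0 (min (min (1 - q) ((1 + q) / 2)) ((1 - t) / r) - q)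

/-- The slack `u - q` for `u = (1 - t) / r`. For `0 ≤ t ≤ q ≤ 1 / 2` one has
`slice r q t = max (fA r q t) 0 - max (fB r q t) 0`. -/
def fA (r q t : ℝ) : ℝ := (1 - t) / r - q

/-- The amount by which `(1 - t) / r` exceeds the bound `min (1 - q) ((1 + q) / 2)`, which comes
from the triangle and the vertex region. -/
def fB (r q t : ℝ) : ℝ := (1 - t) / r - min (1 - q) ((1 + q) / 2)

/-- The counterpart of `fA` for `slice r t q`. -/
def fA' (r q t : ℝ) : ℝ := (1 - q) / r - t

/-- The counterpart of `fB` for `slice r t q`, where the minimum is replaced by `(1 + t) / 2`. -/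
def fB' (r q t : ℝ) : ℝ := (1 - q) / r - (1 + t) / 2

/-- The largest value of `slice r q t` over `r ≥ 1` and `t ≥ 0`, for `0 ≤ q ≤ 1 / 2`. The second
argument is ignored, so that `fM` has the same shape as the other functions of `q` and `t`. -/
def fM (q _t : ℝ) : ℝ := min (1 - q) ((1 + q) / 2) - q

/-- The product of slices as a combination of terms in each of which only one positive part
occurs. The product of the two subtracted positive parts simplifies because `fB' > 0` forces
`fB ≥ 0`, and then the first slice has its maximal value `fM`. -/
lemma slice_mul_slice {r q t : ℝ} (hr : 1 ≤ r) (ht : 0 ≤ t) (htq : t ≤ q) (hq : q ≤ 1 / 2) :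
    slice r q t * slice r t q = max (fA r q t) 0 * fA' r q t - max (fB r q t) 0 * fA' r q t
      - max (fB' r q t) 0 * fM q t := by
  have hr0 : 0 < r := by linarith
  obtain ⟨u, hu⟩ : ∃ u, u = (1 - t) / r := ⟨_, rfl⟩
  obtain ⟨v, hv⟩ : ∃ v, v = (1 - q) / r := ⟨_, rfl⟩
  have hur : u * r = 1 - t := by rw [hu]; field_simp
  have hvr : v * r = 1 - q := by rw [hv]; field_simp
  have hv1 : v ≤ 1 - t := by nlinarith
  have hdiff : (u - v) * r = q - t := by linarith
  have huv : v ≤ u := by nlinarith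
  have huv2 : u - v ≤ q - t := by nlinarith
  unfold slice fA fB fA' fB' fM
  rw [← hu, ← hv]
  have hu0 : 0 ≤ u := by rw [hu]; apply div_nonneg <;> linarith
  obtain ⟨M, hM⟩ : ∃ M, M = min (1 - q) ((1 + q) / 2) := ⟨_, rfl⟩
  have hM1 : M ≤ (1 + q) / 2 := hM ▸ min_le_right _ _
  have hMq : q ≤ M := by rw [hM]; exact le_min (by linarith) (by linarith)
  rw [← hM]
  have e1 : max 0 (min M u - q) = max (u - q) 0 - max (u - M) 0 := by
    rcases le_total M u with h | h
    · rw [min_eq_left h, max_eq_right (by linarith), max_eq_left (by linarith),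
        max_eq_left (by linarith)]; ring
    · rw [min_eq_right h, max_eq_right (b := 0) (by linarith : u - M ≤ 0), max_comm]; ring
  have e2 : max 0 (min (min (1 - t) ((1 + t) / 2)) v - t)
      = max (v - t) 0 - max (v - (1 + t) / 2) 0 := by
    rw [min_right_comm, min_eq_right hv1]
    rcases le_total v ((1 + t) / 2) with h | h
    · rw [min_eq_left h, max_eq_right (b := 0) (by linarith : v - (1 + t) / 2 ≤ 0), max_comm]; ring
    · rw [min_eq_right h, max_eq_right (by linarith), max_eq_left (by linarith),
        max_eq_left (by linarith)]; ring
  rw [e1, e2]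
  -- `fB' > 0` forces `fB ≥ 0`, since the former gives `r < 2`
  have key : 0 < v - (1 + t) / 2 → M ≤ u := by
    intro h
    have h3 : r * (1 + t) < 2 * (1 - q) := by nlinarith
    have h4 : r < 2 := by nlinarith
    have h5 : r * (1 + q) ≤ 2 * (1 - t) := by nlinarith
    have h6 : (1 + q) / 2 ≤ u := by rw [hu, le_div_iff₀ hr0]; linarith
    linarith
  rcases le_or_gt (u - q) 0 with hA | hA
  · have hB' : v - (1 + t) / 2 ≤ 0 := by
      by_contra! hcon
      have := key hcon
      linarith
    rw [max_eq_right hA, max_eq_right hB', max_eq_right (by linarith : u - M ≤ 0)]; ring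
  · rw [max_eq_left hA.le, max_eq_left (by linarith : 0 ≤ v - t)]
    rcases le_or_gt (v - (1 + t) / 2) 0 with hB' | hB'
    · rw [max_eq_right hB']; ring
    · rw [max_eq_left hB'.le, max_eq_left (by linarith [key hB'] : 0 ≤ u - M)]; ring

/-- The integral of the product of slices over `0 ≤ t ≤ q ≤ 1 / 2`. -/
def halfInt (r : ℝ) : ℝ := ∫ q in (0:ℝ)..1/2, ∫ t in (0:ℝ)..q, slice r q t * slice r t q

lemma continuous_integral_zero {F : ℝ → ℝ → ℝ} (hF : Continuous (Function.uncurry F)) :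
    Continuous fun q : ℝ => ∫ t in (0:ℝ)..q, F q t :=
  intervalIntegral.continuous_parametric_intervalIntegral_of_continuous hF continuous_id

lemma continuous_termA (r : ℝ) :
    Continuous (Function.uncurry fun q t => max (fA r q t) 0 * fA' r q t) := by
  unfold fA fA' Function.uncurry; fun_prop

lemma continuous_termB (r : ℝ) :
    Continuous (Function.uncurry fun q t => max (fB r q t) 0 * fA' r q t) := by
  unfold fB fA' Function.uncurry; fun_prop

lemma continuous_termB' (r : ℝ) :
    Continuous (Function.uncurry fun q t => max (fB' r q t) 0 * fM q t) := by
  unfold fB' fM Function.uncurry; fun_prop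

lemma halfInt_eq {r : ℝ} (hr : 1 ≤ r) :
    halfInt r = (∫ q in (0:ℝ)..1/2, ∫ t in (0:ℝ)..q, max (fA r q t) 0 * fA' r q t)
      - (∫ q in (0:ℝ)..1/2, ∫ t in (0:ℝ)..q, max (fB r q t) 0 * fA' r q t)
      - ∫ q in (0:ℝ)..1/2, ∫ t in (0:ℝ)..q, max (fB' r q t) 0 * fM q t := by
  have cA := continuous_integral_zero (continuous_termA r)
  have cB := continuous_integral_zero (continuous_termB r)
  have cB' := continuous_integral_zero (continuous_termB' r)
  have cAB : Continuous fun q : ℝ => (∫ t in (0:ℝ)..q, max (fA r q t) 0 * fA' r q t)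
      - ∫ t in (0:ℝ)..q, max (fB r q t) 0 * fA' r q t := cA.sub cB
  unfold halfInt
  rw [← intervalIntegral.integral_sub (cA.intervalIntegrable _ _) (cB.intervalIntegrable _ _),
    ← intervalIntegral.integral_sub (cAB.intervalIntegrable _ _)
      (cB'.intervalIntegrable _ _)]
  apply intervalIntegral.integral_congr
  intro q hq
  rw [Set.uIcc_of_le (by norm_num)] at hq
  have iA : IntervalIntegrable (fun t => max (fA r q t) 0 * fA' r q t) volume 0 q :=
    ((continuous_termA r).comp (Continuous.prodMk_right q)).intervalIntegrable _ _
  have iB : IntervalIntegrable (fun t => max (fB r q t) 0 * fA' r q t) volume 0 q :=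
    ((continuous_termB r).comp (Continuous.prodMk_right q)).intervalIntegrable _ _
  have iB' : IntervalIntegrable (fun t => max (fB' r q t) 0 * fM q t) volume 0 q :=
    ((continuous_termB' r).comp (Continuous.prodMk_right q)).intervalIntegrable _ _
  have iAB : IntervalIntegrable (fun t => max (fA r q t) 0 * fA' r q t
      - max (fB r q t) 0 * fA' r q t) volume 0 q := iA.sub iB
  simp only
  rw [← intervalIntegral.integral_sub iA iB, ← intervalIntegral.integral_sub iAB iB']
  apply intervalIntegral.integral_congr
  intro t ht
  rw [Set.uIcc_of_le hq.1] at ht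
  exact slice_mul_slice hr ht.1 ht.2 hq.2

lemma split_integral {F : ℝ → ℝ → ℝ} (hF : Continuous (Function.uncurry F)) (a b c : ℝ) :
    ∫ q in a..c, ∫ t in (0:ℝ)..q, F q t
      = (∫ q in a..b, ∫ t in (0:ℝ)..q, F q t) + ∫ q in b..c, ∫ t in (0:ℝ)..q, F q t :=
  (intervalIntegral.integral_add_adjacent_intervals
    ((continuous_integral_zero hF).intervalIntegrable _ _)
    ((continuous_integral_zero hF).intervalIntegrable _ _)).symm

/-! ### The integral over the coordinates, case by case in `r`

Each of the three terms of `slice_mul_slice` is integrated over pieces of `[0, 1 / 2]` cut at the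
values of `q` where the boundary line of its positive part meets the diagonal `t = q` or the axis
`t = 0`, and at `q = 1 / 3`, where `1 - q = (1 + q) / 2`. -/

lemma termA_low {r : ℝ} (h1r : 1 ≤ r) (hr2 : r ≤ 2) :
    ∫ q in (0:ℝ)..1/2, ∫ t in (0:ℝ)..q, max (fA r q t) 0 * fA' r q t
      = outerVal (1 / r) (-1) (-(1 / r)) (1 / r) (-(1 / r)) (-1) 1 0 0 (1 / (1 + r))
        + outerVal (1 / r) (-1) (-(1 / r)) (1 / r) (-(1 / r)) (-1) (-r) 1 (1 / (1 + r)) (1 / 2) := by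
  have hr0 : 0 < r := by linarith
  rw [split_integral (continuous_termA r) 0 (1 / (1 + r)) (1 / 2)]
  have e : ∀ q t, 1 / r + -1 * q + -(1 / r) * t = (1 - r * q - t) / r := by
    intro q t; field_simp; ring
  congr 1
  · apply integral_piece
    · positivity
    · intros; unfold fA; ring
    · intros; unfold fA'; ring
    · intros; linarith
    · intros; linarith
    · intro q t _ hq _ ht
      rw [le_div_iff₀ (by linarith)] at hq
      rw [e]; exact div_nonneg (by nlinarith) hr0.le
    · intros; linarith
  · apply integral_piece
    · rw [div_le_div_iff₀] <;> linarith
    · intros; unfold fA; ring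
    · intros; unfold fA'; ring
    · intros; nlinarith
    · intro q hq _
      rw [div_le_iff₀ (by linarith)] at hq
      linarith
    · intro q t _ _ _ ht
      rw [e]; exact div_nonneg (by linarith) hr0.le
    · intro q t _ _ ht _
      rw [e]; exact div_nonpos_of_nonpos_of_nonneg (by linarith) hr0.le

lemma termA_high {r : ℝ} (hr2 : 2 ≤ r) :
    ∫ q in (0:ℝ)..1/2, ∫ t in (0:ℝ)..q, max (fA r q t) 0 * fA' r q t
      = outerVal (1 / r) (-1) (-(1 / r)) (1 / r) (-(1 / r)) (-1) 1 0 0 (1 / (1 + r))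
        + outerVal (1 / r) (-1) (-(1 / r)) (1 / r) (-(1 / r)) (-1) (-r) 1
          (1 / (1 + r)) (1 / r) := by
  have hr0 : 0 < r := by linarith
  have e : ∀ q t, 1 / r + -1 * q + -(1 / r) * t = (1 - r * q - t) / r := by
    intro q t; field_simp; ring
  have hzero : ∫ q in (1 / r)..1/2, ∫ t in (0:ℝ)..q, max (fA r q t) 0 * fA' r q t = 0 := by
    apply integral_piece_zero (by positivity)
    · rw [div_le_div_iff₀] <;> linarith
    · intro q t hq _ ht _
      unfold fA
      rw [div_le_iff₀ hr0] at hq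
      rw [sub_nonpos, div_le_iff₀ hr0]; linarith
  rw [split_integral (continuous_termA r) 0 (1 / r) (1 / 2), hzero, add_zero,
    split_integral (continuous_termA r) 0 (1 / (1 + r)) (1 / r)]
  congr 1
  · apply integral_piece
    · positivity
    · intros; unfold fA; ring
    · intros; unfold fA'; ring
    · intros; linarith
    · intros; linarith
    · intro q t _ hq _ ht
      rw [le_div_iff₀ (by linarith)] at hq
      rw [e]; exact div_nonneg (by nlinarith) hr0.le
    · intros; linarith
  · apply integral_piece
    · rw [div_le_div_iff₀] <;> linarith
    · intros; unfold fA; ring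
    · intros; unfold fA'; ring
    · intro q _ hq
      rw [le_div_iff₀ hr0] at hq
      linarith
    · intro q hq _
      rw [div_le_iff₀ (by linarith)] at hq
      linarith
    · intro q t _ _ _ ht
      rw [e]; exact div_nonneg (by linarith) hr0.le
    · intro q t _ _ ht _
      rw [e]; exact div_nonpos_of_nonpos_of_nonneg (by linarith) hr0.le

lemma termB_first {r : ℝ} (h1r : 1 ≤ r) (hr2 : r ≤ 2) :
    ∫ q in (0:ℝ)..((2 - r) / (2 + r)), ∫ t in (0:ℝ)..q, max (fB r q t) 0 * fA' r q t
      = outerVal (1 / r - 1 / 2) (-(1 / 2)) (-(1 / r)) (1 / r) (-(1 / r)) (-1) 1 0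
        0 ((2 - r) / (2 + r)) := by
  have hr0 : 0 < r := by linarith
  have e : ∀ q t, 1 / r - 1 / 2 + -(1 / 2) * q + -(1 / r) * t
      = (2 - r - r * q - 2 * t) / (2 * r) := by
    intro q t; field_simp; ring
  apply integral_piece
  · exact div_nonneg (by linarith) (by linarith)
  · intro q t _ hq _ _
    rw [le_div_iff₀ (by linarith)] at hq
    unfold fB
    rw [min_eq_right (by nlinarith)]; ring
  · intros; unfold fA'; ring
  · intros; linarith
  · intros; linarith
  · intro q t _ hq _ ht
    rw [le_div_iff₀ (by linarith)] at hq
    rw [e]; exact div_nonneg (by nlinarith) (by linarith)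
  · intros; linarith

/-- The part of the `fB`-term between the diagonal crossing and a right end `b`, up to which the
line `r q + 2 t = 2 - r` stays above the `q`-axis. -/
lemma termB_second {r b : ℝ} (h1r : 1 ≤ r) (hb : (2 - r) / (2 + r) ≤ b)
    (hb3 : b ≤ 1 / 3) (hbr : r * b ≤ 2 - r) :
    ∫ q in ((2 - r) / (2 + r))..b, ∫ t in (0:ℝ)..q, max (fB r q t) 0 * fA' r q t
      = outerVal (1 / r - 1 / 2) (-(1 / 2)) (-(1 / r)) (1 / r) (-(1 / r)) (-1)
        (-(r / 2)) (1 - r / 2) ((2 - r) / (2 + r)) b := by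
  have hr0 : 0 < r := by linarith
  have e : ∀ q t, 1 / r - 1 / 2 + -(1 / 2) * q + -(1 / r) * t
      = (2 - r - r * q - 2 * t) / (2 * r) := by
    intro q t; field_simp; ring
  apply integral_piece
  · exact hb
  · intro q t _ hq _ _
    unfold fB
    rw [min_eq_right (by linarith)]; ring
  · intros; unfold fA'; ring
  · intros; nlinarith
  · intro q hq _
    rw [div_le_iff₀ (by linarith)] at hq
    linarith
  · intro q t _ hq _ ht
    rw [e]; exact div_nonneg (by nlinarith) (by linarith)
  · intro q t _ hq ht _
    rw [e]; exact div_nonpos_of_nonpos_of_nonneg (by linarith) (by linarith)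

/-- The part of the `fB`-term near `q = 1 / 2`, where the minimum in `fB` is `1 - q`. -/
lemma termB_third {r a : ℝ} (h1r : 1 ≤ r) (ha : 1 / 3 ≤ a)
    (har : r * (1 - a) ≤ 1) (ha2 : a ≤ 1 / 2) :
    ∫ q in a..1 / 2, ∫ t in (0:ℝ)..q, max (fB r q t) 0 * fA' r q t
      = outerVal (1 / r - 1) 1 (-(1 / r)) (1 / r) (-(1 / r)) (-1) r (1 - r) a (1 / 2) := by
  have hr0 : 0 < r := by linarith
  have e : ∀ q t, 1 / r - 1 + 1 * q + -(1 / r) * t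
      = (1 - r + r * q - t) / r := by
    intro q t; field_simp; ring
  apply integral_piece
  · exact ha2
  · intro q t hq _ _ _
    unfold fB
    rw [min_eq_left (by linarith)]; ring
  · intros; unfold fA'; ring
  · intros; nlinarith
  · intros; nlinarith
  · intro q t _ hq _ ht
    rw [e]; exact div_nonneg (by nlinarith) (by linarith)
  · intro q t _ hq ht _
    rw [e]; exact div_nonpos_of_nonpos_of_nonneg (by linarith) (by linarith)

lemma termB_low {r : ℝ} (h1r : 1 ≤ r) (hr2 : r ≤ 3 / 2) :
    ∫ q in (0:ℝ)..1/2, ∫ t in (0:ℝ)..q, max (fB r q t) 0 * fA' r q t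
      = outerVal (1 / r - 1 / 2) (-(1 / 2)) (-(1 / r)) (1 / r) (-(1 / r)) (-1) 1 0
          0 ((2 - r) / (2 + r))
        + outerVal (1 / r - 1 / 2) (-(1 / 2)) (-(1 / r)) (1 / r) (-(1 / r)) (-1)
          (-(r / 2)) (1 - r / 2) ((2 - r) / (2 + r)) (1 / 3)
        + outerVal (1 / r - 1) 1 (-(1 / r)) (1 / r) (-(1 / r)) (-1) r (1 - r)
          (1 / 3) (1 / 2) := by
  rw [split_integral (continuous_termB r) 0 (1 / 3) (1 / 2),
    split_integral (continuous_termB r) 0 ((2 - r) / (2 + r)) (1 / 3),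
    termB_first h1r (by linarith), termB_second h1r _ le_rfl (by linarith),
    termB_third h1r le_rfl (by linarith) (by norm_num)]
  rw [div_le_div_iff₀] <;> linarith

lemma termB_mid {r : ℝ} (hr1 : 3 / 2 ≤ r) (hr2 : r ≤ 2) :
    ∫ q in (0:ℝ)..1/2, ∫ t in (0:ℝ)..q, max (fB r q t) 0 * fA' r q t
      = outerVal (1 / r - 1 / 2) (-(1 / 2)) (-(1 / r)) (1 / r) (-(1 / r)) (-1) 1 0
          0 ((2 - r) / (2 + r))
        + outerVal (1 / r - 1 / 2) (-(1 / 2)) (-(1 / r)) (1 / r) (-(1 / r)) (-1)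
          (-(r / 2)) (1 - r / 2) ((2 - r) / (2 + r)) ((2 - r) / r)
        + outerVal (1 / r - 1) 1 (-(1 / r)) (1 / r) (-(1 / r)) (-1) r (1 - r)
          (1 - 1 / r) (1 / 2) := by
  have hr0 : 0 < r := by linarith
  have hi1 : 1 / r ≤ 2 / 3 := by rw [div_le_iff₀ hr0]; linarith
  have hi2 : 1 / 2 ≤ 1 / r := by rw [div_le_div_iff₀] <;> linarith
  have hs : (2 - r) / r = 2 * (1 / r) - 1 := by field_simp
  have hir : r * (1 / r) = 1 := by field_simp
  have hzero : ∫ q in ((2 - r) / r)..(1 - 1 / r), ∫ t in (0:ℝ)..q,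
      max (fB r q t) 0 * fA' r q t = 0 := by
    apply integral_piece_zero
    · exact div_nonneg (by linarith) (by linarith)
    · linarith
    · intro q t hq hq' ht _
      unfold fB
      have : (1 - t) / r ≤ 1 / r := by
        apply div_le_div_of_nonneg_right _ hr0.le; linarith
      rw [sub_nonpos]
      exact le_min (by linarith) (by linarith)
  rw [split_integral (continuous_termB r) 0 ((2 - r) / r) (1 / 2),
    split_integral (continuous_termB r) ((2 - r) / r) (1 - 1 / r) (1 / 2), hzero, zero_add,
    split_integral (continuous_termB r) 0 ((2 - r) / (2 + r)) ((2 - r) / r),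
    termB_first (by linarith) (by linarith), termB_second (by linarith) _ (by linarith),
    termB_third (by linarith) (by linarith) _ (by linarith)]
  · rw [mul_sub, mul_sub, hir]; linarith
  · rw [mul_div_cancel₀ _ hr0.ne']
  · exact div_le_div_of_nonneg_left (by linarith) hr0 (by linarith)

lemma termB_high {r : ℝ} (hr2 : 2 ≤ r) :
    ∫ q in (0:ℝ)..1/2, ∫ t in (0:ℝ)..q, max (fB r q t) 0 * fA' r q t = 0 := by
  apply integral_piece_zero le_rfl (by norm_num)
  intro q t hq hq' ht _
  unfold fB
  have : (1 - t) / r ≤ 1 / 2 := by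
    rw [div_le_div_iff₀] <;> linarith
  rw [sub_nonpos]
  exact le_min (by linarith) (by linarith)

lemma termB'_first {r : ℝ} (h1r : 1 ≤ r) (hr2 : r ≤ 2) :
    ∫ q in (0:ℝ)..((2 - r) / (2 + r)), ∫ t in (0:ℝ)..q, max (fB' r q t) 0 * fM q t
      = outerVal (1 / r - 1 / 2) (-(1 / r)) (-(1 / 2)) (1 / 2) (-(1 / 2)) 0 1 0
        0 ((2 - r) / (2 + r)) := by
  have hr0 : 0 < r := by linarith
  have e : ∀ q t, 1 / r - 1 / 2 + -(1 / r) * q + -(1 / 2) * t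
      = (2 - r - 2 * q - r * t) / (2 * r) := by
    intro q t; field_simp; ring
  apply integral_piece
  · exact div_nonneg (by linarith) (by linarith)
  · intros; unfold fB'; ring
  · intro q t _ hq _ _
    rw [le_div_iff₀ (by linarith)] at hq
    unfold fM
    rw [min_eq_right (by nlinarith)]; ring
  · intros; linarith
  · intros; linarith
  · intro q t _ hq _ ht
    rw [le_div_iff₀ (by linarith)] at hq
    rw [e]; exact div_nonneg (by nlinarith) (by linarith)
  · intros; linarith

/-- Part of the `fB'`-term to the right of the diagonal crossing, with `b₀ + b₁ q` the linear
function that `min (1 - q) ((1 + q) / 2) - q` equals on `[a, b]`. -/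
lemma termB'_second {r a b b₀ b₁ : ℝ} (h1r : 1 ≤ r) (ha : (2 - r) / (2 + r) ≤ a)
    (hab : a ≤ b) (hb : b ≤ 1 - r / 2) (hM : ∀ q t, a ≤ q → q ≤ b → fM q t = b₀ + b₁ * q) :
    ∫ q in a..b, ∫ t in (0:ℝ)..q, max (fB' r q t) 0 * fM q t
      = outerVal (1 / r - 1 / 2) (-(1 / r)) (-(1 / 2)) b₀ b₁ 0
        (-(2 / r)) ((2 - r) / r) a b := by
  have hr0 : 0 < r := by linarith
  have e : ∀ q t, 1 / r - 1 / 2 + -(1 / r) * q + -(1 / 2) * t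
      = (2 - r - 2 * q - r * t) / (2 * r) := by
    intro q t; field_simp; ring
  have e2 : ∀ q, -(2 / r) * q + (2 - r) / r = (2 - r - 2 * q) / r := by
    intro q; field_simp; ring
  apply integral_piece
  · exact hab
  · intros; unfold fB'; ring
  · intro q t h1 h2 _ _
    rw [hM q t h1 h2]; ring
  · intros; rw [e2]; exact div_nonneg (by linarith) (by linarith)
  · intro q hq _
    have := ha.trans hq
    rw [div_le_iff₀ (by linarith)] at this
    rw [e2, div_le_iff₀ hr0]; linarith
  · intro q t _ hq _ ht
    rw [e2, le_div_iff₀ hr0] at ht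
    rw [e]; exact div_nonneg (by linarith) (by linarith)
  · intro q t _ hq ht _
    rw [e2, div_lt_iff₀ hr0] at ht
    rw [e]; exact div_nonpos_of_nonpos_of_nonneg (by linarith) (by linarith)

lemma termB'_zero {r a : ℝ} (h1r : 1 ≤ r) (ha0 : 0 ≤ a) (ha : 1 - r / 2 ≤ a) (ha2 : a ≤ 1 / 2) :
    ∫ q in a..1/2, ∫ t in (0:ℝ)..q, max (fB' r q t) 0 * fM q t = 0 := by
  apply integral_piece_zero ha0 ha2
  intro q t hq hq' ht _
  unfold fB'
  have : (1 - q) / r ≤ 1 / 2 := by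
    rw [div_le_div_iff₀] <;> linarith
  linarith

lemma diag_le {r : ℝ} (h1r : 1 ≤ r) (hr2 : r ≤ 2) : (2 - r) / (2 + r) ≤ 1 - r / 2 := by
  rw [div_le_iff₀ (by linarith)]; nlinarith

lemma termB'_low {r : ℝ} (h1r : 1 ≤ r) (hr2 : r ≤ 4 / 3) :
    ∫ q in (0:ℝ)..1/2, ∫ t in (0:ℝ)..q, max (fB' r q t) 0 * fM q t
      = outerVal (1 / r - 1 / 2) (-(1 / r)) (-(1 / 2)) (1 / 2) (-(1 / 2)) 0 1 0
          0 ((2 - r) / (2 + r))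
        + outerVal (1 / r - 1 / 2) (-(1 / r)) (-(1 / 2)) (1 / 2) (-(1 / 2)) 0
          (-(2 / r)) ((2 - r) / r) ((2 - r) / (2 + r)) (1 / 3)
        + outerVal (1 / r - 1 / 2) (-(1 / r)) (-(1 / 2)) 1 (-2) 0
          (-(2 / r)) ((2 - r) / r) (1 / 3) (1 - r / 2) := by
  have hs : (2 - r) / (2 + r) ≤ 1 / 3 := by rw [div_le_div_iff₀] <;> linarith
  rw [split_integral (continuous_termB' r) 0 (1 - r / 2) (1 / 2),
    termB'_zero h1r (by linarith) le_rfl (by linarith), add_zero,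
    split_integral (continuous_termB' r) 0 (1 / 3) (1 - r / 2),
    split_integral (continuous_termB' r) 0 ((2 - r) / (2 + r)) (1 / 3),
    termB'_first h1r (by linarith),
    termB'_second (b₀ := 1 / 2) (b₁ := -(1 / 2)) h1r le_rfl hs (by linarith),
    termB'_second (b₀ := 1) (b₁ := -2) h1r hs (by linarith) le_rfl]
  · intro q t hq _
    unfold fM
    rw [min_eq_left (by linarith)]; ring
  · intro q t _ hq
    unfold fM
    rw [min_eq_right (by linarith)]; ring

lemma termB'_mid {r : ℝ} (h1r : 4 / 3 ≤ r) (hr2 : r ≤ 2) :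
    ∫ q in (0:ℝ)..1/2, ∫ t in (0:ℝ)..q, max (fB' r q t) 0 * fM q t
      = outerVal (1 / r - 1 / 2) (-(1 / r)) (-(1 / 2)) (1 / 2) (-(1 / 2)) 0 1 0
          0 ((2 - r) / (2 + r))
        + outerVal (1 / r - 1 / 2) (-(1 / r)) (-(1 / 2)) (1 / 2) (-(1 / 2)) 0
          (-(2 / r)) ((2 - r) / r) ((2 - r) / (2 + r)) (1 - r / 2) := by
  rw [split_integral (continuous_termB' r) 0 (1 - r / 2) (1 / 2),
    termB'_zero (by linarith) (by linarith) le_rfl (by linarith), add_zero,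
    split_integral (continuous_termB' r) 0 ((2 - r) / (2 + r)) (1 - r / 2),
    termB'_first (by linarith) (by linarith),
    termB'_second (b₀ := 1 / 2) (b₁ := -(1 / 2)) (by linarith) le_rfl
      (diag_le (by linarith) hr2) le_rfl]
  intro q t _ hq
  unfold fM
  rw [min_eq_right (by linarith)]; ring

lemma halfInt_1 {r : ℝ} (h1r : 1 ≤ r) (hr2 : r ≤ 4 / 3) :
    1 - 48 * halfInt r = (47 * r ^ 6 - 195 * r ^ 5 + 860 * r ^ 4 - 846 * r ^ 3 - 108 * r ^ 2
          + 720 * r - 256) / (108 * r ^ 2 * (r + 2) * (r + 1)) := by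
  rw [halfInt_eq h1r, termA_low h1r (by linarith), termB_low h1r (by linarith),
    termB'_low h1r hr2]
  have : r ≠ 0 := by positivity
  have : 1 + r ≠ 0 := by positivity
  have : r + 1 ≠ 0 := by positivity
  have : 2 + r ≠ 0 := by positivity
  have : r + 2 ≠ 0 := by positivity
  unfold outerVal innerVal
  field_simp
  ring

lemma halfInt_2 {r : ℝ} (h1r : 4 / 3 ≤ r) (hr2 : r ≤ 3 / 2) :
    1 - 48 * halfInt r =
      (175 * r ^ 5 - 579 * r ^ 4 + 1450 * r ^ 3 - 732 * r ^ 2 - 536 * r + 672)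
          / (216 * r * (r + 2) * (r + 1)) := by
  rw [halfInt_eq (by linarith), termA_low (by linarith) (by linarith),
    termB_low (by linarith) (by linarith), termB'_mid h1r (by linarith)]
  have : r ≠ 0 := by positivity
  have : 1 + r ≠ 0 := by positivity
  have : r + 1 ≠ 0 := by positivity
  have : 2 + r ≠ 0 := by positivity
  have : r + 2 ≠ 0 := by positivity
  unfold outerVal innerVal
  field_simp
  ring

lemma halfInt_3 {r : ℝ} (h1r : 3 / 2 ≤ r) (hr2 : r ≤ 2) :
    1 - 48 * halfInt r = -(3 * r ^ 8 - 7 * r ^ 7 - 30 * r ^ 6 + 84 * r ^ 5 - 264 * r ^ 4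
          + 304 * r ^ 3 + 144 * r ^ 2 - 368 * r + 96) / (8 * r ^ 4 * (r + 2) * (r + 1)) := by
  rw [halfInt_eq (by linarith), termA_low (by linarith) (by linarith),
    termB_mid (by linarith) (by linarith), termB'_mid (by linarith) (by linarith)]
  have : r ≠ 0 := by positivity
  have : 1 + r ≠ 0 := by positivity
  have : r + 1 ≠ 0 := by positivity
  have : 2 + r ≠ 0 := by positivity
  have : r + 2 ≠ 0 := by positivity
  unfold outerVal innerVal
  field_simp
  ring

lemma halfInt_4 {r : ℝ} (hr2 : 2 ≤ r) :
    1 - 48 * halfInt r = (r ^ 5 + r ^ 4 - 6 * r + 2) / (r ^ 4 * (r + 1)) := by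
  rw [halfInt_eq (by linarith), termA_high hr2, termB_high hr2,
    termB'_zero (by linarith) le_rfl (by linarith) (by norm_num)]
  have : r ≠ 0 := by positivity
  have : 1 + r ≠ 0 := by positivity
  have : r + 1 ≠ 0 := by positivity
  unfold outerVal innerVal
  field_simp
  ring

/-! ### Barycentric coordinates and vertex regions -/

lemma det2_ne_zero {y : Fin 3 → ℝ × ℝ} (hy : ¬ Collinear ℝ ({y 0, y 1, y 2} : Set (ℝ × ℝ))) :
    det2 (y 0 - y 2) (y 1 - y 2) ≠ 0 := by
  intro h
  apply hy
  rw [collinear_iff_of_mem (p₀ := y 2) (by simp)]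
  by_cases hu : y 0 - y 2 = 0
  · refine ⟨y 1 - y 2, ?_⟩
    rintro p (rfl | rfl | rfl)
    · exact ⟨0, by simpa [sub_eq_zero] using hu⟩
    · exact ⟨1, by simp⟩
    · exact ⟨0, by simp⟩
  · have hn : (y 0 - y 2).1 ^ 2 + (y 0 - y 2).2 ^ 2 ≠ 0 := by
      intro h0
      apply hu
      have h1 : (y 0 - y 2).1 = 0 := by nlinarith [sq_nonneg (y 0 - y 2).1, sq_nonneg (y 0 - y 2).2]
      have h2 : (y 0 - y 2).2 = 0 := by nlinarith [sq_nonneg (y 0 - y 2).1, sq_nonneg (y 0 - y 2).2]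
      exact Prod.ext h1 h2
    refine ⟨y 0 - y 2, ?_⟩
    rintro p (rfl | rfl | rfl)
    · exact ⟨1, by simp⟩
    · refine ⟨((y 0 - y 2).1 * (y 1 - y 2).1 + (y 0 - y 2).2 * (y 1 - y 2).2)
        / ((y 0 - y 2).1 ^ 2 + (y 0 - y 2).2 ^ 2), ?_⟩
      rw [vadd_eq_add, ← sub_eq_iff_eq_add]
      unfold det2 at h
      generalize y 0 - y 2 = u at *
      generalize y 1 - y 2 = w at *
      ext
      · simp only [Prod.smul_fst, smul_eq_mul]
        field_simp
        linear_combination (-u.2) * h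
      · simp only [Prod.smul_snd, smul_eq_mul]
        field_simp
        linear_combination (u.1) * h
    · exact ⟨0, by simp⟩

/-- The point with barycentric coordinates `a`, `b`, `1 - a - b` with respect to `y i`, `y j`,
`y k`, where `p = (a, b)`. -/
def baryMap (y : Fin 3 → ℝ × ℝ) (i j k : Fin 3) (p : ℝ × ℝ) : ℝ × ℝ :=
  p.1 • y i + p.2 • y j + (1 - p.1 - p.2) • y k

lemma bary_affine {y : Fin 3 → ℝ × ℝ} (hD : det2 (y 0 - y 2) (y 1 - y 2) ≠ 0) {a b c : ℝ}
    (h : a + b + c = 1) :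
    bary y 0 (a • y 0 + b • y 1 + c • y 2) = a ∧ bary y 1 (a • y 0 + b • y 1 + c • y 2) = b ∧
      bary y 2 (a • y 0 + b • y 1 + c • y 2) = c := by
  obtain rfl : c = 1 - a - b := by linarith
  simp only [det2, Prod.fst_sub, Prod.snd_sub] at hD
  refine ⟨?_, ?_, ?_⟩
  · simp only [bary, det2, zero_add, Prod.fst_sub, Prod.snd_sub, Prod.fst_add, Prod.snd_add,
      Prod.smul_fst, Prod.smul_snd, smul_eq_mul]
    rw [div_eq_iff]
    · ring
    · intro h; apply hD; linarith
  · simp only [bary, det2, Fin.isValue, Fin.reduceAdd, Prod.fst_sub, Prod.snd_sub, Prod.fst_add,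
      Prod.snd_add, Prod.smul_fst, Prod.smul_snd, smul_eq_mul]
    rw [div_eq_iff]
    · ring
    · intro h; apply hD; linarith
  · simp only [bary, det2, Fin.isValue, Fin.reduceAdd, Prod.fst_sub, Prod.snd_sub, Prod.fst_add,
      Prod.snd_add, Prod.smul_fst, Prod.smul_snd, smul_eq_mul]
    rw [div_eq_iff]
    · ring
    · intro h; apply hD; linarith

lemma bary_recover {y : Fin 3 → ℝ × ℝ} (hD : det2 (y 0 - y 2) (y 1 - y 2) ≠ 0) (z : ℝ × ℝ) :
    bary y 0 z + bary y 1 z + bary y 2 z = 1 ∧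
      z = bary y 0 z • y 0 + bary y 1 z • y 1 + bary y 2 z • y 2 := by
  -- Cramer's rule
  obtain ⟨a, b, hab⟩ : ∃ a b : ℝ, z = a • y 0 + b • y 1 + (1 - a - b) • y 2 := by
    refine ⟨det2 (z - y 2) (y 1 - y 2) / det2 (y 0 - y 2) (y 1 - y 2),
      det2 (y 0 - y 2) (z - y 2) / det2 (y 0 - y 2) (y 1 - y 2), ?_⟩
    obtain ⟨D, hDe⟩ : ∃ D, D = det2 (y 0 - y 2) (y 1 - y 2) := ⟨_, rfl⟩
    rw [← hDe] at hD ⊢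
    simp only [det2, Prod.fst_sub, Prod.snd_sub] at hDe
    ext
    · simp only [det2, Prod.fst_sub, Prod.snd_sub, Prod.fst_add, Prod.smul_fst, smul_eq_mul]
      field_simp
      rw [hDe]; ring
    · simp only [det2, Prod.fst_sub, Prod.snd_sub, Prod.snd_add, Prod.smul_snd, smul_eq_mul]
      field_simp
      rw [hDe]; ring
  obtain ⟨h0, h1, h2⟩ := bary_affine hD (show a + b + (1 - a - b) = 1 by ring)
  rw [← hab] at h0 h1 h2
  rw [h0, h1, h2]
  exact ⟨by ring, hab⟩

lemma bary_convex_comb {y : Fin 3 → ℝ × ℝ} (i : Fin 3) (z w : ℝ × ℝ) {a b : ℝ} (hab : a + b = 1) :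
    bary y i (a • z + b • w) = a * bary y i z + b * bary y i w := by
  obtain rfl : b = 1 - a := by linarith
  simp only [bary, det2, Prod.fst_sub, Prod.snd_sub, Prod.fst_add,
      Prod.snd_add, Prod.smul_fst, Prod.smul_snd, smul_eq_mul]
  ring

lemma bary_vertex {y : Fin 3 → ℝ × ℝ} (hD : det2 (y 0 - y 2) (y 1 - y 2) ≠ 0) (i j : Fin 3) :
    bary y i (y j) = if i = j then 1 else 0 := by
  have e1 := @bary_affine y hD 1 0 0 (by ring)
  have e2 := @bary_affine y hD 0 1 0 (by ring)
  have e3 := @bary_affine y hD 0 0 1 (by ring)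
  simp only [one_smul, zero_smul, add_zero, zero_add] at e1 e2 e3
  fin_cases i <;> fin_cases j <;> simp_all

lemma bary_baryMap {y : Fin 3 → ℝ × ℝ} (hD : det2 (y 0 - y 2) (y 1 - y 2) ≠ 0) {i j k : Fin 3}
    (hij : i ≠ j) (hik : i ≠ k) (hjk : j ≠ k) (p : ℝ × ℝ) :
    bary y i (baryMap y i j k p) = p.1 ∧ bary y j (baryMap y i j k p) = p.2 ∧
      bary y k (baryMap y i j k p) = 1 - p.1 - p.2 := by
  have key : ∀ m, bary y m (baryMap y i j k p)
      = p.1 * bary y m (y i) + p.2 * bary y m (y j) + (1 - p.1 - p.2) * bary y m (y k) := by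
    intro m
    simp only [baryMap, bary, det2, Prod.fst_sub, Prod.snd_sub, Prod.fst_add,
      Prod.snd_add, Prod.smul_fst, Prod.smul_snd, smul_eq_mul]
    ring
  simp only [key, bary_vertex hD]
  simp [hij, hik, hjk, hij.symm, hik.symm, hjk.symm]

lemma mem_triangle_iff {y : Fin 3 → ℝ × ℝ} (hD : det2 (y 0 - y 2) (y 1 - y 2) ≠ 0) (z : ℝ × ℝ) :
    z ∈ triangle y ↔ ∀ i, 0 ≤ bary y i z := by
  constructor
  · intro hz
    refine convexHull_min (t := {z | ∀ i, 0 ≤ bary y i z}) ?_ ?_ hz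
    · rintro p (rfl | rfl | rfl) i <;> rw [bary_vertex hD] <;> split_ifs <;> norm_num
    · intro p hp q hq a b ha hb hab i
      rw [bary_convex_comb i p q hab]
      exact add_nonneg (mul_nonneg ha (hp i)) (mul_nonneg hb (hq i))
  · intro h
    obtain ⟨h1, h2⟩ := bary_recover hD z
    rw [h2]
    have := (convex_convexHull ℝ ({y 0, y 1, y 2} : Set (ℝ × ℝ))).sum_mem
      (t := Finset.univ) (w := fun i => bary y i z) (z := y) (fun i _ => h i)
      (by rw [Fin.sum_univ_three]; exact h1)
      (fun i _ => subset_convexHull ℝ _ (by fin_cases i <;> simp))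
    rwa [Fin.sum_univ_three] at this

/-- The vertex region of `y i` consists of the points of the triangle whose `i`-th barycentric
coordinate is the largest. -/
lemma mem_vertexRegion_iff {y : Fin 3 → ℝ × ℝ} (hD : det2 (y 0 - y 2) (y 1 - y 2) ≠ 0) (i : Fin 3)
    (z : ℝ × ℝ) :
    z ∈ vertexRegion y i ↔ ∀ j, 0 ≤ bary y j z ∧ bary y j z ≤ bary y i z := by
  constructor
  · intro hz
    refine convexHull_min (t := {z | ∀ j, 0 ≤ bary y j z ∧ bary y j z ≤ bary y i z}) ?_ ?_ hz
    · have hmid : ∀ a b : ℝ × ℝ, midpoint ℝ a b = (1/2 : ℝ) • a + (1/2 : ℝ) • b := by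
        intro a b
        rw [midpoint_eq_smul_add, smul_add]; norm_num
      have hC : ∀ j, bary y j ((3:ℝ)⁻¹ • (y 0 + y 1 + y 2)) = 3⁻¹ := by
        have := @bary_affine y hD 3⁻¹ 3⁻¹ 3⁻¹ (by norm_num)
        rw [← smul_add, ← smul_add] at this
        intro j
        fin_cases j
        exacts [this.1, this.2.1, this.2.2]
      have hi1 : (i = i + 1) = False := by fin_cases i <;> simp
      have hi2 : (i = i + 2) = False := by fin_cases i <;> simp
      rintro p (rfl | rfl | rfl | rfl) j
      · rw [bary_vertex hD, bary_vertex hD]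
        split_ifs <;> norm_num at *
      · rw [hmid, bary_convex_comb j _ _ (by norm_num), bary_convex_comb i _ _ (by norm_num)]
        rcases eq_or_ne j i with rfl | hji
        · simp only [bary_vertex hD, hi1, if_true, if_false]
          norm_num
        · simp only [bary_vertex hD, hi1, hji, if_true, if_false]
          split_ifs <;> norm_num
      · rw [hmid, bary_convex_comb j _ _ (by norm_num), bary_convex_comb i _ _ (by norm_num)]
        rcases eq_or_ne j i with rfl | hji
        · simp only [bary_vertex hD, hi2, if_true, if_false]
          norm_num
        · simp only [bary_vertex hD, hi2, hji, if_true, if_false]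
          split_ifs <;> norm_num
      · rw [hC, hC]; norm_num
    · intro p hp q hq a b ha hb hab j
      rw [bary_convex_comb j p q hab, bary_convex_comb i p q hab]
      exact ⟨add_nonneg (mul_nonneg ha (hp j).1) (mul_nonneg hb (hq j).1),
        add_le_add (mul_le_mul_of_nonneg_left (hp j).2 ha) (mul_le_mul_of_nonneg_left (hq j).2 hb)⟩
  · intro h
    obtain ⟨h1, h2⟩ := bary_recover hD z
    have hi1 := h (i + 1)
    have hi2 := h (i + 2)
    -- rotate the indices so that `i` comes first
    have h1' : bary y i z + bary y (i + 1) z + bary y (i + 2) z = 1 := by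
      fin_cases i <;> simp <;> linarith
    have h2' : z = bary y i z • y i + bary y (i + 1) z • y (i + 1)
        + bary y (i + 2) z • y (i + 2) :=
      h2.trans (by fin_cases i <;> simp <;> abel)
    have hsum : y 0 + y 1 + y 2 = y i + y (i + 1) + y (i + 2) := by
      fin_cases i <;> simp <;> abel
    clear h2
    generalize bary y i z = a at *
    generalize bary y (i + 1) z = b at *
    generalize bary y (i + 2) z = c at *
    have hmem : ∀ α β γ δ : ℝ, 0 ≤ α → 0 ≤ β → 0 ≤ γ → 0 ≤ δ → α + β + γ + δ = 1 →
        α • y i + β • midpoint ℝ (y i) (y (i + 1)) + γ • midpoint ℝ (y i) (y (i + 2))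
          + δ • ((3 : ℝ)⁻¹ • (y 0 + y 1 + y 2)) ∈ vertexRegion y i := by
      intro α β γ δ hα hβ hγ hδ hs
      have := (convex_convexHull ℝ ({y i, midpoint ℝ (y i) (y (i + 1)),
        midpoint ℝ (y i) (y (i + 2)), (3 : ℝ)⁻¹ • (y 0 + y 1 + y 2)} : Set (ℝ × ℝ))).sum_mem
        (t := Finset.univ) (w := ![α, β, γ, δ]) (z := ![y i, midpoint ℝ (y i) (y (i + 1)),
        midpoint ℝ (y i) (y (i + 2)), (3 : ℝ)⁻¹ • (y 0 + y 1 + y 2)])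
        (by intro j _; fin_cases j <;> simpa)
        (by rw [Fin.sum_univ_four]; exact hs)
        (fun j _ => subset_convexHull ℝ _ (by fin_cases j <;> simp))
      rw [Fin.sum_univ_four] at this
      exact this
    rcases le_total b c with hbc | hbc
    · have := hmem (a - c) 0 (2 * (c - b)) (3 * b) (by linarith) le_rfl (by linarith)
        (by linarith) (by linarith)
      convert this using 1
      rw [hsum, h2', midpoint_eq_smul_add, midpoint_eq_smul_add]
      ext
      · simp; ring
      · simp; ring
    · have := hmem (a - b) (2 * (b - c)) 0 (3 * c) (by linarith) (by linarith) le_rfl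
        (by linarith) (by linarith)
      convert this using 1
      rw [hsum, h2', midpoint_eq_smul_add, midpoint_eq_smul_add]
      ext
      · simp; ring
      · simp; ring

/-! ### Non-adjacent pairs in barycentric coordinates -/

/-- Pairs `((p, q), (t, s))` of coordinate vectors describing non-adjacent points `x`, `z` with
`x` in the vertex region of `y i` and `z` in that of `y j`: `p`, `q` are the barycentric coordinates
of `x` with respect to `y i`, `y j`, and `t`, `s` are those of `z`. -/
def farSet (r : ℝ) : Set ((ℝ × ℝ) × (ℝ × ℝ)) :=
  {w | (0 ≤ w.1.2 ∧ w.1.1 + w.1.2 ≤ 1 ∧ w.1.2 < w.1.1 ∧ 1 - w.1.1 - w.1.2 < w.1.1 ∧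
      r * (1 - w.1.1) < 1 - w.2.1) ∧
    (0 ≤ w.2.1 ∧ w.2.1 + w.2.2 ≤ 1 ∧ w.2.1 < w.2.2 ∧ 1 - w.2.1 - w.2.2 < w.2.2 ∧
      r * (1 - w.2.2) < 1 - w.1.2)}

lemma measurableSet_farSet (r : ℝ) : MeasurableSet (farSet r) := by
  unfold farSet
  measurability

/-- The coordinate shuffle `((q, t), (p, s)) ↦ ((p, q), (t, s))` preserves Lebesgue measure. -/
lemma measurePreserving_shuffle :
    MeasurePreserving (fun w : (ℝ × ℝ) × (ℝ × ℝ) => ((w.2.1, w.1.1), (w.1.2, w.2.2)))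
      volume volume := by
  have e1 : MeasurePreserving (MeasurableEquiv.prodAssoc : (ℝ × ℝ) × (ℝ × ℝ) ≃ᵐ ℝ × ℝ × ℝ × ℝ) :=
    volume_preserving_prodAssoc
  have e2 : MeasurePreserving (MeasurableEquiv.prodAssoc : (ℝ × ℝ) × ℝ ≃ᵐ ℝ × ℝ × ℝ) :=
    volume_preserving_prodAssoc
  have sw : MeasurePreserving (Prod.swap : ℝ × ℝ → ℝ × ℝ) := Measure.measurePreserving_swap
  have i1 : MeasurePreserving (id : ℝ → ℝ) := MeasurePreserving.id _
  have i2 : MeasurePreserving (id : ℝ × ℝ → ℝ × ℝ) := MeasurePreserving.id _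
  have f : MeasurePreserving (fun w : ℝ × ℝ × ℝ => (w.2.1, w.1, w.2.2)) volume volume :=
    e2.comp ((sw.prod i1).comp (e2.symm _))
  exact (sw.prod i2).comp ((e1.symm _).comp ((i1.prod f).comp e1))

lemma slice_nonneg (r q t : ℝ) : 0 ≤ slice r q t := le_max_left _ _

lemma continuous_slice (r : ℝ) : Continuous fun w : ℝ × ℝ => slice r w.1 w.2 := by
  unfold slice; fun_prop

lemma slice_eq_zero {r q t : ℝ} (hq : 1 / 2 ≤ q) : slice r q t = 0 := by
  unfold slice
  refine max_eq_left ?_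
  have h1 : min (min (1 - q) ((1 + q) / 2)) ((1 - t) / r) ≤ 1 - q :=
    (min_le_left _ _).trans (min_le_left _ _)
  linarith

/-- The function whose integral over the plane is the volume of `farSet r`. -/
def sliceProd (r : ℝ) (w : ℝ × ℝ) : ENNReal :=
  {w : ℝ × ℝ | 0 ≤ w.1 ∧ 0 ≤ w.2}.indicator
    (fun w => ENNReal.ofReal (slice r w.1 w.2 * slice r w.2 w.1)) w

lemma measurable_sliceProd (r : ℝ) : Measurable (sliceProd r) := by
  have h := continuous_slice r
  refine Measurable.indicator ?_ (by measurability)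
  exact (ENNReal.continuous_ofReal.comp
    (h.mul (h.comp continuous_swap))).measurable

/-- For fixed `q` and `t` the admissible values of `p` form an interval of length
`slice r q t`. -/
lemma volume_slice {r : ℝ} (hr : 1 ≤ r) (q t : ℝ) :
    volume {p : ℝ | p + q ≤ 1 ∧ q < p ∧ 1 - p - q < p ∧ r * (1 - p) < 1 - t}
      = ENNReal.ofReal (slice r q t) := by
  have hr0 : 0 < r := by linarith
  have : {p : ℝ | p + q ≤ 1 ∧ q < p ∧ 1 - p - q < p ∧ r * (1 - p) < 1 - t}
      = Set.Ioc (max (max q ((1 - q) / 2)) (1 - (1 - t) / r)) (1 - q) := by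
    ext p
    simp only [Set.mem_ofPred_eq, Set.mem_Ioc, max_lt_iff]
    have : r * (1 - p) < 1 - t ↔ 1 - (1 - t) / r < p := by
      rw [sub_lt_comm, lt_div_iff₀ hr0, mul_comm]
    rw [this]
    constructor
    · rintro ⟨h1, h2, h3, h4⟩
      exact ⟨⟨⟨h2, by linarith⟩, h4⟩, by linarith⟩
    · rintro ⟨⟨⟨h2, h3⟩, h4⟩, h1⟩
      exact ⟨by linarith, h2, by linarith, h4⟩
  rw [this, Real.volume_Ioc]
  have e : 1 - q - max (max q ((1 - q) / 2)) (1 - (1 - t) / r)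
      = min (min (1 - q) ((1 + q) / 2)) ((1 - t) / r) - q := by
    rw [← min_sub_sub_left, ← min_sub_sub_left, ← min_sub_sub_right, ← min_sub_sub_right]
    congr 1
    · congr 1; ring
    · ring
  rw [e]
  unfold slice
  rw [max_comm, ENNReal.ofReal_max]
  simp

lemma volume_farSet {r : ℝ} (hr : 1 ≤ r) : volume (farSet r) = ∫⁻ w, sliceProd r w := by
  rw [← measurePreserving_shuffle.measure_preimage (measurableSet_farSet r).nullMeasurableSet,
    Measure.volume_eq_prod, Measure.prod_apply
      (measurePreserving_shuffle.measurable (measurableSet_farSet r))]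
  refine lintegral_congr fun w => ?_
  unfold sliceProd
  by_cases hw : 0 ≤ w.1 ∧ 0 ≤ w.2
  · rw [Set.indicator_of_mem (by exact hw), ENNReal.ofReal_mul (slice_nonneg _ _ _),
      ← volume_slice hr, ← volume_slice hr, ← Measure.prod_prod, ← Measure.volume_eq_prod]
    congr 1
    ext u
    simp only [farSet, Set.mem_preimage, Set.mem_ofPred_eq, Set.mem_prod, hw, true_and]
    constructor
    · rintro ⟨⟨h1, h2, h3, h4⟩, h5, h6, h7, h8⟩
      exact ⟨⟨h1, h2, h3, h4⟩, by linarith, h6, by linarith, h8⟩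
    · rintro ⟨⟨h1, h2, h3, h4⟩, h5, h6, h7, h8⟩
      exact ⟨⟨h1, h2, h3, h4⟩, by linarith, h6, by linarith, h8⟩
  · rw [Set.indicator_of_notMem (by exact hw)]
    convert measure_empty (μ := (volume : Measure (ℝ × ℝ))) using 2
    ext u
    simp only [farSet, Set.mem_preimage, Set.mem_ofPred_eq, Set.mem_empty_iff_false, iff_false]
    exact fun h => hw ⟨h.1.1, h.2.1⟩

lemma volume_diagonal : volume {w : ℝ × ℝ | w.1 = w.2} = 0 := by
  rw [Measure.volume_eq_prod, Measure.measure_prod_null (by measurability)]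
  refine Eventually.of_forall fun a => ?_
  have : Prod.mk a ⁻¹' {w : ℝ × ℝ | w.1 = w.2} = {a} := by
    ext b; simp [eq_comm]
  simp [this]

/-- By symmetry, the integral of `sliceProd` is twice its integral over `t ≤ q`. -/
lemma lintegral_sliceProd_symm (r : ℝ) :
    ∫⁻ w, sliceProd r w = 2 * ∫⁻ w, {w : ℝ × ℝ | w.2 ≤ w.1}.indicator (sliceProd r) w := by
  have hA : MeasurableSet {w : ℝ × ℝ | w.2 ≤ w.1} := by measurability
  have hswap : ∀ w, sliceProd r w.swap = sliceProd r w := by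
    intro w
    simp only [sliceProd, Set.indicator, Set.mem_ofPred_eq, Prod.fst_swap, Prod.snd_swap,
      and_comm, mul_comm]
  rw [← lintegral_add_compl _ hA, two_mul]
  congr 1
  · rw [lintegral_indicator hA]
  · rw [← lintegral_indicator hA.compl, Measure.volume_eq_prod, ← lintegral_prod_swap]
    refine lintegral_congr_ae ?_
    have : ∀ᵐ w : ℝ × ℝ ∂(volume.prod volume), w.1 ≠ w.2 := by
      rw [ae_iff, ← Measure.volume_eq_prod]; simpa using volume_diagonal
    filter_upwards [this] with w hw
    simp only [Set.indicator, Set.mem_compl_iff, Set.mem_ofPred_eq, Prod.fst_swap, Prod.snd_swap,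
      hswap, not_le]
    have : w.2 < w.1 ↔ w.2 ≤ w.1 := ⟨le_of_lt, fun h => lt_of_le_of_ne h hw.symm⟩
    simp only [this]

lemma volume_farSet_eq {r : ℝ} (hr : 1 ≤ r) :
    volume (farSet r) = ENNReal.ofReal (2 * halfInt r) := by
  have hA : MeasurableSet {w : ℝ × ℝ | w.2 ≤ w.1} := by measurability
  have hc : Continuous (Function.uncurry fun q t => slice r q t * slice r t q) :=
    (continuous_slice r).mul ((continuous_slice r).comp continuous_swap)
  have hn : ∀ q t, 0 ≤ slice r q t * slice r t q :=
    fun q t => mul_nonneg (slice_nonneg _ _ _) (slice_nonneg _ _ _)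
  rw [volume_farSet hr, lintegral_sliceProd_symm, ENNReal.ofReal_mul (by norm_num)]
  congr 1
  · norm_num
  rw [Measure.volume_eq_prod, lintegral_prod _
    ((measurable_sliceProd r).indicator hA).aemeasurable]
  have inner : ∀ q : ℝ, ∫⁻ t, {w : ℝ × ℝ | w.2 ≤ w.1}.indicator (sliceProd r) (q, t)
      = (Set.Icc (0:ℝ) (1 / 2)).indicator
        (fun q => ENNReal.ofReal (∫ t in (0:ℝ)..q, slice r q t * slice r t q)) q := by
    intro q
    by_cases hq : q ∈ Set.Icc (0:ℝ) (1 / 2)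
    · rw [Set.indicator_of_mem hq, intervalIntegral.integral_of_le hq.1,
        ← integral_Icc_eq_integral_Ioc,
        ofReal_integral_eq_lintegral_ofReal ?_ (Eventually.of_forall fun t => hn q t),
        ← lintegral_indicator measurableSet_Icc]
      · refine lintegral_congr fun t => ?_
        simp only [sliceProd, Set.indicator, Set.mem_ofPred_eq, Set.mem_Icc, hq.1, true_and]
        split_ifs <;> simp_all
      · exact (hc.comp (Continuous.prodMk_right q)).continuousOn.integrableOn_Icc
    · rw [Set.indicator_of_notMem hq]
      refine (lintegral_congr fun t => ?_).trans lintegral_zero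
      simp only [sliceProd, Set.indicator, Set.mem_ofPred_eq]
      split_ifs with h1 h2
      · have : 1 / 2 ≤ q := by
          by_contra h
          exact hq ⟨h2.1, by linarith⟩
        rw [slice_eq_zero this]; simp
      · rfl
      · rfl
  rw [lintegral_congr inner, lintegral_indicator measurableSet_Icc, halfInt,
    intervalIntegral.integral_of_le (by norm_num), ← integral_Icc_eq_integral_Ioc,
    ofReal_integral_eq_lintegral_ofReal]
  · exact (continuous_integral_zero hc).continuousOn.integrableOn_Icc
  · filter_upwards [ae_restrict_mem measurableSet_Icc] with q hq
    exact intervalIntegral.integral_nonneg hq.1 fun t _ => hn q t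

/-! ### The uniform distribution in barycentric coordinates -/

lemma measurable_bary (y : Fin 3 → ℝ × ℝ) (i : Fin 3) : Measurable (bary y i) := by
  unfold bary det2; fun_prop

lemma measurable_baryMap (y : Fin 3 → ℝ × ℝ) (i j k : Fin 3) : Measurable (baryMap y i j k) := by
  unfold baryMap; fun_prop

/-- Coordinate vectors `(a, b)` for which `(a, b, 1 - a - b)` are the barycentric coordinates of a
point of the triangle. -/
def coordSimplex : Set (ℝ × ℝ) := {p | 0 ≤ p.1 ∧ 0 ≤ p.2 ∧ p.1 + p.2 ≤ 1}

lemma measurableSet_coordSimplex : MeasurableSet coordSimplex := by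
  unfold coordSimplex; measurability

lemma volume_coordSimplex : volume coordSimplex = 2⁻¹ := by
  rw [Measure.volume_eq_prod, Measure.prod_apply measurableSet_coordSimplex]
  have : ∀ a : ℝ, volume (Prod.mk a ⁻¹' coordSimplex)
      = (Set.Icc (0:ℝ) 1).indicator (fun a => ENNReal.ofReal (1 - a)) a := by
    intro a
    by_cases ha : a ∈ Set.Icc (0:ℝ) 1
    · rw [Set.indicator_of_mem ha]
      have : Prod.mk a ⁻¹' coordSimplex = Set.Icc 0 (1 - a) := by
        ext b
        simp only [coordSimplex, Set.mem_preimage, Set.mem_ofPred_eq, Set.mem_Icc, ha.1, true_and]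
        exact and_congr Iff.rfl ⟨fun h => by linarith, fun h => by linarith⟩
      rw [this, Real.volume_Icc, sub_zero]
    · rw [Set.indicator_of_notMem ha]
      convert measure_empty (μ := (volume : Measure ℝ)) using 2
      ext b
      simp only [coordSimplex, Set.mem_preimage, Set.mem_ofPred_eq, Set.mem_empty_iff_false,
        iff_false]
      exact fun h => ha ⟨h.1, by linarith [h.2.1, h.2.2]⟩
  rw [lintegral_congr this, lintegral_indicator measurableSet_Icc,
    ← ofReal_integral_eq_lintegral_ofReal, integral_Icc_eq_integral_Ioc,
    ← intervalIntegral.integral_of_le (by norm_num)]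
  · rw [intervalIntegral.integral_sub (by simp) (by simp)]
    rw [integral_id, intervalIntegral.integral_const]
    norm_num
    rw [one_div, ENNReal.ofReal_inv_of_pos (by norm_num)]
    norm_num
  · exact (by fun_prop : Continuous fun a : ℝ => 1 - a).continuousOn.integrableOn_Icc
  · filter_upwards [ae_restrict_mem measurableSet_Icc] with a ha
    simpa using ha.2

lemma baryMap_preimage_triangle {y : Fin 3 → ℝ × ℝ} (hD : det2 (y 0 - y 2) (y 1 - y 2) ≠ 0)
    {i j k : Fin 3} (hij : i ≠ j) (hik : i ≠ k) (hjk : j ≠ k) :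
    baryMap y i j k ⁻¹' triangle y = coordSimplex := by
  ext p
  obtain ⟨h1, h2, h3⟩ := bary_baryMap hD hij hik hjk p
  rw [Set.mem_preimage, mem_triangle_iff hD]
  constructor
  · intro h
    have e1 := h i
    have e2 := h j
    have e3 := h k
    rw [h1] at e1
    rw [h2] at e2
    rw [h3] at e3
    exact ⟨e1, e2, by linarith⟩
  · rintro ⟨e1, e2, e3⟩ m
    have hm : ∀ i j k m : Fin 3, i ≠ j → i ≠ k → j ≠ k → m = i ∨ m = j ∨ m = k := by decide
    rcases hm i j k m hij hik hjk with rfl | rfl | rfl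
    · rw [h1]; exact e1
    · rw [h2]; exact e2
    · rw [h3]; linarith

lemma measurableSet_triangle {y : Fin 3 → ℝ × ℝ} (hD : det2 (y 0 - y 2) (y 1 - y 2) ≠ 0) :
    MeasurableSet (triangle y) := by
  have : triangle y = ⋂ i, {z | 0 ≤ bary y i z} := by
    ext z; rw [mem_triangle_iff hD, Set.mem_iInter]; rfl
  rw [this]
  exact MeasurableSet.iInter fun i => measurableSet_le measurable_const (measurable_bary y i)

/-- An affine isomorphism scales Lebesgue measure by a constant. -/
lemma map_baryMap_volume {y : Fin 3 → ℝ × ℝ} (hD : det2 (y 0 - y 2) (y 1 - y 2) ≠ 0)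
    {i j k : Fin 3} (hij : i ≠ j) (hik : i ≠ k) (hjk : j ≠ k) :
    ∃ κ : ENNReal, Measure.map (baryMap y i j k) volume = κ • volume := by
  let f : ℝ × ℝ →ₗ[ℝ] ℝ × ℝ :=
    (LinearMap.fst ℝ ℝ ℝ).smulRight (y i - y k) + (LinearMap.snd ℝ ℝ ℝ).smulRight (y j - y k)
  have hf : ∀ p, baryMap y i j k p = y k + f p := by
    intro p
    simp only [baryMap, f, LinearMap.add_apply, LinearMap.smulRight_apply, LinearMap.fst_apply,
      LinearMap.snd_apply]
    module
  have hinj : Function.Injective f := by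
    intro p q hpq
    have e : baryMap y i j k p = baryMap y i j k q := by rw [hf, hf, hpq]
    obtain ⟨p1, p2, -⟩ := bary_baryMap hD hij hik hjk p
    obtain ⟨q1, q2, -⟩ := bary_baryMap hD hij hik hjk q
    rw [e] at p1 p2
    exact Prod.ext (p1.symm.trans q1) (p2.symm.trans q2)
  have hdet : LinearMap.det f ≠ 0 :=
    (LinearEquiv.ofInjectiveEndo f hinj).isUnit_det'.ne_zero
  refine ⟨ENNReal.ofReal |(LinearMap.det f)⁻¹|, ?_⟩
  have : baryMap y i j k = (fun z => y k + z) ∘ f := funext hf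
  rw [this, ← Measure.map_map (by fun_prop) f.continuous_of_finiteDimensional.measurable,
    Measure.map_linearMap_addHaar_eq_smul_addHaar _ hdet, Measure.map_smul,
    map_add_left_eq_self]

lemma unif_eq_map {y : Fin 3 → ℝ × ℝ} (hD : det2 (y 0 - y 2) (y 1 - y 2) ≠ 0)
    {i j k : Fin 3} (hij : i ≠ j) (hik : i ≠ k) (hjk : j ≠ k) :
    unif y = Measure.map (baryMap y i j k) ((2 : ENNReal) • volume.restrict coordSimplex) := by
  obtain ⟨κ, hκ⟩ := map_baryMap_volume hD hij hik hjk
  have hT := measurableSet_triangle hD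
  have hφ := measurable_baryMap y i j k
  have hvol : κ * volume (triangle y) = 2⁻¹ := by
    rw [← volume_coordSimplex, ← baryMap_preimage_triangle hD hij hik hjk,
      ← Measure.map_apply hφ hT, hκ]
    simp
  have hinv : (volume (triangle y))⁻¹ = 2 * κ := by
    symm
    apply ENNReal.eq_inv_of_mul_eq_one_left
    rw [mul_assoc, hvol]
    exact ENNReal.mul_inv_cancel (by norm_num) (by norm_num)
  rw [Measure.map_smul, ← baryMap_preimage_triangle hD hij hik hjk, ← Measure.restrict_map hφ hT,
    hκ, Measure.restrict_smul, smul_smul, unif, hinv]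

lemma exists_third : ∀ i j : Fin 3, i ≠ j → ∃ k, i ≠ k ∧ j ≠ k := by decide

lemma isProbabilityMeasure_unif {y : Fin 3 → ℝ × ℝ} (hD : det2 (y 0 - y 2) (y 1 - y 2) ≠ 0) :
    IsProbabilityMeasure (unif y) := by
  constructor
  rw [unif_eq_map hD (show (0 : Fin 3) ≠ 1 by decide) (show (0 : Fin 3) ≠ 2 by decide)
    (show (1 : Fin 3) ≠ 2 by decide), Measure.map_apply (measurable_baryMap _ _ _ _) .univ]
  simp only [Set.preimage_univ, Measure.smul_apply, Measure.restrict_apply_univ, smul_eq_mul,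
    volume_coordSimplex]
  exact ENNReal.mul_inv_cancel (by norm_num) (by norm_num)

/-- Almost surely no two barycentric coordinates of a uniform point coincide. -/
lemma ae_unif_ne {y : Fin 3 → ℝ × ℝ} (hD : det2 (y 0 - y 2) (y 1 - y 2) ≠ 0) :
    ∀ᵐ x ∂(unif y), x ∈ triangle y ∧ ∀ m n : Fin 3, m ≠ n → bary y m x ≠ bary y n x := by
  have h1 : ∀ᵐ x ∂(unif y), x ∈ triangle y :=
    Measure.ae_smul_measure (ae_restrict_mem (measurableSet_triangle hD)) _
  refine h1.and ?_
  rw [ae_all_iff]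
  intro m
  rw [ae_all_iff]
  intro n
  by_cases hmn : m = n
  · exact Eventually.of_forall fun x h => absurd hmn h
  obtain ⟨k, hmk, hnk⟩ := exists_third m n hmn
  rw [unif_eq_map hD hmn hmk hnk, ae_map_iff (measurable_baryMap _ _ _ _).aemeasurable]
  · refine Measure.ae_smul_measure (ae_restrict_of_ae ?_) _
    have : ∀ᵐ p : ℝ × ℝ, p.1 ≠ p.2 := by
      rw [ae_iff]; simpa using volume_diagonal
    filter_upwards [this] with p hp _
    rw [(bary_baryMap hD hmn hmk hnk p).1, (bary_baryMap hD hmn hmk hnk p).2.1]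
    exact hp
  · have : {x | m ≠ n → bary y m x ≠ bary y n x} = {x | bary y m x = bary y n x}ᶜ := by
      ext x; simp [hmn]
    rw [this]
    exact (measurableSet_eq_fun (measurable_bary y m) (measurable_bary y n)).compl

/-! ### Reduction of the edge probability to `halfInt` -/

/-- Points of the triangle whose `i`-th barycentric coordinate is strictly the largest. -/
def openRegion (y : Fin 3 → ℝ × ℝ) (i : Fin 3) : Set (ℝ × ℝ) :=
  {x | x ∈ triangle y ∧ ∀ m, m ≠ i → bary y m x < bary y i x}

/-- Non-adjacent pairs `(x, z)` with `x` in the region of `y i` and `z` in the region of `y j`. -/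
def farPairs (y : Fin 3 → ℝ × ℝ) (r : ℝ) (i j : Fin 3) : Set ((ℝ × ℝ) × (ℝ × ℝ)) :=
  {w | (w.1 ∈ openRegion y i ∧ w.2 ∈ openRegion y j) ∧
    r * (1 - bary y i w.1) < 1 - bary y i w.2 ∧ r * (1 - bary y j w.2) < 1 - bary y j w.1}

lemma openRegion_unique {y : Fin 3 → ℝ × ℝ} {i j : Fin 3} {x : ℝ × ℝ} (hi : x ∈ openRegion y i)
    (hj : x ∈ openRegion y j) : i = j := by
  by_contra h
  exact lt_asymm (hi.2 j (Ne.symm h)) (hj.2 i h)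

lemma exists_openRegion {y : Fin 3 → ℝ × ℝ} {x : ℝ × ℝ} (hx : x ∈ triangle y)
    (hne : ∀ m n : Fin 3, m ≠ n → bary y m x ≠ bary y n x) : ∃ i, x ∈ openRegion y i := by
  obtain ⟨i, hi⟩ := Finite.exists_max fun i => bary y i x
  exact ⟨i, hx, fun m hm => lt_of_le_of_ne (hi m) (hne m i hm)⟩

lemma vtx_eq {y : Fin 3 → ℝ × ℝ} (hD : det2 (y 0 - y 2) (y 1 - y 2) ≠ 0) {i : Fin 3} {x : ℝ × ℝ}
    (hi : x ∈ openRegion y i) : vtx y x = i := by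
  have hpos := (mem_triangle_iff hD x).1 hi.1
  have hmem : ∀ m, x ∈ vertexRegion y m ↔ m = i := by
    intro m
    rw [mem_vertexRegion_iff hD]
    constructor
    · intro h
      by_contra hm
      exact absurd (h i).2 (not_le.2 (hi.2 m hm))
    · rintro rfl n
      refine ⟨hpos n, ?_⟩
      rcases eq_or_ne n m with rfl | hn
      · exact le_rfl
      · exact (hi.2 n hn).le
  simp only [vtx, hmem]
  fin_cases i <;> simp

/-- At a vertex the other two barycentric coordinates are both `0`, so a point with distinct
coordinates is not a vertex. -/
lemma ne_vertex {y : Fin 3 → ℝ × ℝ} (hD : det2 (y 0 - y 2) (y 1 - y 2) ≠ 0) {x : ℝ × ℝ}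
    (hne : ∀ m n : Fin 3, m ≠ n → bary y m x ≠ bary y n x) (j : Fin 3) : x ≠ y j := by
  rintro rfl
  have hj : ∀ j : Fin 3, ∃ m n, m ≠ n ∧ m ≠ j ∧ n ≠ j := by decide
  obtain ⟨m, n, hmn, hm, hn⟩ := hj j
  apply hne m n hmn
  rw [bary_vertex hD, bary_vertex hD, if_neg hm, if_neg hn]

lemma mem_NPE_iff {y : Fin 3 → ℝ × ℝ} (hD : det2 (y 0 - y 2) (y 1 - y 2) ≠ 0) {r : ℝ}
    {x z : ℝ × ℝ} (hne : ∀ m n : Fin 3, m ≠ n → bary y m x ≠ bary y n x) {i : Fin 3}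
    (hi : x ∈ openRegion y i) (hz : z ∈ triangle y) :
    z ∈ NPE y r x ↔ 1 - bary y i z ≤ r * (1 - bary y i x) := by
  have h := ne_vertex hD hne
  simp only [NPE, h, or_self, if_false, vtx_eq hD hi]
  exact ⟨fun h => h.2, fun h => ⟨hz, h⟩⟩

lemma bary_le_one {y : Fin 3 → ℝ × ℝ} (hD : det2 (y 0 - y 2) (y 1 - y 2) ≠ 0) {x : ℝ × ℝ}
    (hx : x ∈ triangle y) (i : Fin 3) : bary y i x ≤ 1 := by
  have h := (mem_triangle_iff hD x).1 hx
  have h0 := h 0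
  have h1 := h 1
  have h2 := h 2
  have hs := (bary_recover hD x).1
  fin_cases i <;> simp <;> linarith

/-- Two points in the same vertex region are always adjacent, because `r ≥ 1`; hence
non-adjacency forces membership in some `farPairs y r i j` with `i ≠ j`. -/
lemma adjacent_iff {y : Fin 3 → ℝ × ℝ} (hD : det2 (y 0 - y 2) (y 1 - y 2) ≠ 0) {r : ℝ}
    (hr : 1 ≤ r) {w : (ℝ × ℝ) × (ℝ × ℝ)}
    (h1 : w.1 ∈ triangle y ∧ ∀ m n : Fin 3, m ≠ n → bary y m w.1 ≠ bary y n w.1)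
    (h2 : w.2 ∈ triangle y ∧ ∀ m n : Fin 3, m ≠ n → bary y m w.2 ≠ bary y n w.2) :
    (w.2 ∈ NPE y r w.1 ∨ w.1 ∈ NPE y r w.2) ↔
      w ∈ (⋃ e ∈ (Finset.univ : Finset (Fin 3)).offDiag, farPairs y r e.1 e.2)ᶜ := by
  obtain ⟨i, hi⟩ := exists_openRegion h1.1 h1.2
  obtain ⟨j, hj⟩ := exists_openRegion h2.1 h2.2
  rw [mem_NPE_iff hD h1.2 hi h2.1, mem_NPE_iff hD h2.2 hj h1.1]
  have hU : w ∈ (⋃ e ∈ (Finset.univ : Finset (Fin 3)).offDiag, farPairs y r e.1 e.2) ↔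
      i ≠ j ∧ r * (1 - bary y i w.1) < 1 - bary y i w.2 ∧
        r * (1 - bary y j w.2) < 1 - bary y j w.1 := by
    simp only [Set.mem_iUnion, Finset.mem_offDiag, Finset.mem_univ, true_and, exists_prop,
      Prod.exists]
    constructor
    · rintro ⟨a, b, hab, ⟨ha, hb⟩, h⟩
      obtain rfl := openRegion_unique ha hi
      obtain rfl := openRegion_unique hb hj
      exact ⟨hab, h⟩
    · rintro ⟨hij, h⟩
      exact ⟨i, j, hij, ⟨hi, hj⟩, h⟩
  rw [Set.mem_compl_iff, hU]
  rcases eq_or_ne i j with rfl | hij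
  · simp only [ne_eq, not_true_eq_false, false_and, not_false_eq_true, iff_true]
    have b1 := bary_le_one hD h1.1 i
    have b2 := bary_le_one hD h2.1 i
    rcases le_total (bary y i w.1) (bary y i w.2) with h | h
    · left; nlinarith
    · right; nlinarith
  · simp only [ne_eq, hij, not_false_eq_true, true_and, not_and_or, not_lt]

lemma measurableSet_openRegion {y : Fin 3 → ℝ × ℝ} (hD : det2 (y 0 - y 2) (y 1 - y 2) ≠ 0)
    (i : Fin 3) : MeasurableSet (openRegion y i) := by
  have : openRegion y i = triangle y ∩ ⋂ m, ⋂ _ : m ≠ i, {x | bary y m x < bary y i x} := by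
    ext x; simp [openRegion]
  rw [this]
  exact (measurableSet_triangle hD).inter (MeasurableSet.iInter fun m => MeasurableSet.iInter
    fun _ => measurableSet_lt (measurable_bary y m) (measurable_bary y i))

lemma measurableSet_farPairs {y : Fin 3 → ℝ × ℝ} (hD : det2 (y 0 - y 2) (y 1 - y 2) ≠ 0) (r : ℝ)
    (i j : Fin 3) : MeasurableSet (farPairs y r i j) := by
  have hi := measurable_bary y i
  have hj := measurable_bary y j
  refine MeasurableSet.inter (MeasurableSet.inter ?_ ?_) (MeasurableSet.inter ?_ ?_)
  · exact measurable_fst (measurableSet_openRegion hD i)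
  · exact measurable_snd (measurableSet_openRegion hD j)
  · exact measurableSet_lt (f := fun w : (ℝ × ℝ) × (ℝ × ℝ) => r * (1 - bary y i w.1))
      (g := fun w => 1 - bary y i w.2) (by fun_prop) (by fun_prop)
  · exact measurableSet_lt (f := fun w : (ℝ × ℝ) × (ℝ × ℝ) => r * (1 - bary y j w.2))
      (g := fun w => 1 - bary y j w.1) (by fun_prop) (by fun_prop)

lemma baryMap_mem_openRegion {y : Fin 3 → ℝ × ℝ} (hD : det2 (y 0 - y 2) (y 1 - y 2) ≠ 0)
    {i j k : Fin 3} (hij : i ≠ j) (hik : i ≠ k) (hjk : j ≠ k) (p : ℝ × ℝ) :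
    (baryMap y i j k p ∈ openRegion y i ↔
      p ∈ coordSimplex ∧ p.2 < p.1 ∧ 1 - p.1 - p.2 < p.1) ∧
    (baryMap y i j k p ∈ openRegion y j ↔
      p ∈ coordSimplex ∧ p.1 < p.2 ∧ 1 - p.1 - p.2 < p.2) := by
  obtain ⟨h1, h2, h3⟩ := bary_baryMap hD hij hik hjk p
  have hm : ∀ i j k m : Fin 3, i ≠ j → i ≠ k → j ≠ k → m = i ∨ m = j ∨ m = k := by decide
  have hT : baryMap y i j k p ∈ triangle y ↔ p ∈ coordSimplex := by
    rw [← Set.mem_preimage, baryMap_preimage_triangle hD hij hik hjk]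
  unfold openRegion
  rw [Set.mem_ofPred_eq, Set.mem_ofPred_eq, hT]
  refine ⟨and_congr_right fun _ => ⟨fun h => ?_, fun h m hmi => ?_⟩,
    and_congr_right fun _ => ⟨fun h => ?_, fun h m hmi => ?_⟩⟩
  · have e1 := h j hij.symm
    have e2 := h k hik.symm
    rw [h1, h2] at e1
    rw [h1, h3] at e2
    exact ⟨e1, e2⟩
  · rcases hm i j k m hij hik hjk with rfl | rfl | rfl
    · exact absurd rfl hmi
    · rw [h1, h2]; exact h.1
    · rw [h1, h3]; exact h.2
  · have e1 := h i hij
    have e2 := h k hjk.symm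
    rw [h1, h2] at e1
    rw [h2, h3] at e2
    exact ⟨e1, e2⟩
  · rcases hm i j k m hij hik hjk with rfl | rfl | rfl
    · rw [h1, h2]; exact h.1
    · exact absurd rfl hmi
    · rw [h2, h3]; exact h.2

lemma prod_unif_farPairs {y : Fin 3 → ℝ × ℝ} (hD : det2 (y 0 - y 2) (y 1 - y 2) ≠ 0) {r : ℝ}
    (hr : 1 ≤ r) {i j : Fin 3} (hij : i ≠ j) :
    ((unif y).prod (unif y)) (farPairs y r i j) = 4 * ENNReal.ofReal (2 * halfInt r) := by
  obtain ⟨k, hik, hjk⟩ := exists_third i j hij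
  have hφ := measurable_baryMap y i j k
  rw [unif_eq_map hD hij hik hjk, Measure.map_prod_map _ _ hφ hφ,
    Measure.map_apply (hφ.prodMap hφ) (measurableSet_farPairs hD r i j),
    Measure.prod_smul_left, Measure.prod_smul_right, Measure.prod_restrict, smul_smul,
    Measure.smul_apply, Measure.restrict_apply (hφ.prodMap hφ (measurableSet_farPairs hD r i j)),
    ← volume_farSet_eq hr, ← Measure.volume_eq_prod, smul_eq_mul]
  congr 1
  · norm_num
  congr 1
  ext ⟨p, q⟩
  have hp := bary_baryMap hD hij hik hjk p
  have hq := bary_baryMap hD hij hik hjk q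
  simp only [farPairs, farSet, Set.mem_inter_iff, Set.mem_preimage, Prod.map_apply,
    Set.mem_ofPred_eq, (baryMap_mem_openRegion hD hij hik hjk p).1,
    (baryMap_mem_openRegion hD hij hik hjk q).2, hp, hq, Set.mem_prod, coordSimplex]
  constructor
  · rintro ⟨⟨⟨⟨⟨a1, a2, a3⟩, a4, a5⟩, ⟨b1, b2, b3⟩, b4, b5⟩, c1, c2⟩, -⟩
    exact ⟨⟨a2, a3, a4, a5, c1⟩, b1, b3, b4, b5, c2⟩
  · rintro ⟨⟨a2, a3, a4, a5, c1⟩, b1, b3, b4, b5, c2⟩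
    have a1 : 0 ≤ p.1 := by linarith
    have b2 : 0 ≤ q.2 := by linarith
    exact ⟨⟨⟨⟨⟨a1, a2, a3⟩, a4, a5⟩, ⟨b1, b2, b3⟩, b4, b5⟩, c1, c2⟩, ⟨a1, a2, a3⟩, b1, b2, b3⟩

lemma halfInt_nonneg (r : ℝ) : 0 ≤ halfInt r :=
  intervalIntegral.integral_nonneg (by norm_num) fun _ hq =>
    intervalIntegral.integral_nonneg hq.1 fun _ _ =>
      mul_nonneg (slice_nonneg _ _ _) (slice_nonneg _ _ _)

/-- The non-adjacent pairs split, up to a null set, into the six sets `farPairs y r i j` with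
`i ≠ j`, each of probability `8 * halfInt r`. -/
lemma por_eq {y : Fin 3 → ℝ × ℝ} (hy : ¬ Collinear ℝ ({y 0, y 1, y 2} : Set (ℝ × ℝ))) {r : ℝ}
    (hr : 1 ≤ r) :
    (((unif y).prod (unif y))
      {q : (ℝ × ℝ) × (ℝ × ℝ) | q.2 ∈ NPE y r q.1 ∨ q.1 ∈ NPE y r q.2}).toReal
      = 1 - 48 * halfInt r := by
  have hD := det2_ne_zero hy
  have := isProbabilityMeasure_unif hD
  have hgood := ae_unif_ne hD
  have hae : {q : (ℝ × ℝ) × (ℝ × ℝ) | q.2 ∈ NPE y r q.1 ∨ q.1 ∈ NPE y r q.2}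
      =ᵐ[(unif y).prod (unif y)]
      ((⋃ e ∈ (Finset.univ : Finset (Fin 3)).offDiag, farPairs y r e.1 e.2)ᶜ : Set _) := by
    filter_upwards [Measure.quasiMeasurePreserving_fst.ae hgood,
      Measure.quasiMeasurePreserving_snd.ae hgood] with w h1 h2
    exact propext (adjacent_iff hD hr h1 h2)
  have hU : ((unif y).prod (unif y))
      (⋃ e ∈ (Finset.univ : Finset (Fin 3)).offDiag, farPairs y r e.1 e.2)
      = ENNReal.ofReal (48 * halfInt r) := by
    rw [measure_biUnion_finset]
    · rw [Finset.sum_congr rfl fun e he =>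
        prod_unif_farPairs hD hr (Finset.mem_offDiag.1 he).2.2, Finset.sum_const,
        Finset.offDiag_card, Finset.card_univ, Fintype.card_fin, nsmul_eq_mul, ← mul_assoc,
        show (48 * halfInt r) = 24 * (2 * halfInt r) by ring, ENNReal.ofReal_mul (by norm_num)]
      norm_num
    · intro e _ e' _ hne
      refine Set.disjoint_left.2 fun w hw hw' => hne ?_
      exact Prod.ext (openRegion_unique hw.1.1 hw'.1.1) (openRegion_unique hw.1.2 hw'.1.2)
    · exact fun e _ => measurableSet_farPairs hD r e.1 e.2
  have hle : ENNReal.ofReal (48 * halfInt r) ≤ 1 := hU ▸ prob_le_one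
  rw [measure_congr hae, prob_compl_eq_one_sub
    (Finset.measurableSet_biUnion _ fun e _ => measurableSet_farPairs hD r e.1 e.2), hU,
    ENNReal.toReal_sub_of_le hle (by simp), ENNReal.toReal_one,
    ENNReal.toReal_ofReal (by linarith [halfInt_nonneg r])]

/-- the explicit piecewise formula for the edge probability
`p_or(r) = P(X_2 ∈ N_PE^r(X_1) or X_1 ∈ N_PE^r(X_2))` of the underlying graph, for
`X_1, X_2` i.i.d. uniform on a triangle; in particular `p_or(1) = 37/108`. -/
theorem por_formula
    (y : Fin 3 → ℝ × ℝ) (hy : ¬ Collinear ℝ ({y 0, y 1, y 2} : Set (ℝ × ℝ)))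
    (r : ℝ) (hr : 1 ≤ r) :
    let por : ℝ := (((unif y).prod (unif y))
      {q : (ℝ × ℝ) × (ℝ × ℝ) | q.2 ∈ NPE y r q.1 ∨ q.1 ∈ NPE y r q.2}).toReal
    (r < 4 / 3 →
      por = (47 * r ^ 6 - 195 * r ^ 5 + 860 * r ^ 4 - 846 * r ^ 3 - 108 * r ^ 2
          + 720 * r - 256) / (108 * r ^ 2 * (r + 2) * (r + 1))) ∧
    (4 / 3 ≤ r → r < 3 / 2 →
      por = (175 * r ^ 5 - 579 * r ^ 4 + 1450 * r ^ 3 - 732 * r ^ 2 - 536 * r + 672)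
          / (216 * r * (r + 2) * (r + 1))) ∧
    (3 / 2 ≤ r → r < 2 →
      por = -(3 * r ^ 8 - 7 * r ^ 7 - 30 * r ^ 6 + 84 * r ^ 5 - 264 * r ^ 4
          + 304 * r ^ 3 + 144 * r ^ 2 - 368 * r + 96) / (8 * r ^ 4 * (r + 2) * (r + 1))) ∧
    (2 ≤ r →
      por = (r ^ 5 + r ^ 4 - 6 * r + 2) / (r ^ 4 * (r + 1))) ∧
    (r = 1 → por = 37 / 108) := by
  intro por
  have h : por = 1 - 48 * halfInt r := por_eq hy hr
  rw [h]
  refine ⟨fun h1 => halfInt_1 hr h1.le, fun h1 h2 => halfInt_2 h1 h2.le,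
    fun h1 h2 => halfInt_3 h1 h2.le, fun h1 => halfInt_4 h1, ?_⟩
  rintro rfl
  rw [halfInt_1 le_rfl (by norm_num)]
  norm_num

end
end

section
/- Let y_1, y_2, y_3 ∈ ℝ² be non-collinear, T their closed convex hull, and let X_1, X_2 be i.i.d. uniform on T. For r ∈ [1,∞), set p_and(r) := P(X_2 ∈ N_PE^r(X_1) and X_1 ∈ N_PE^r(X_2)), p(r) := P(X_2 ∈ N_PE^r(X_1)), and p_or(r) := P(X_2 ∈ N_PE^r(X_1) or X_1 ∈ N_PE^r(X_2)). Then for every r ∈ [1,∞) the strict ordering p_and(r) < p(r) < p_or(r) holds. -/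
/-!
The two inequalities are strict because the two arcs of a pair fail to be equivalent with positive
probability. Write `b` for the barycentric coordinate of the vertex `y 0`. The part of the triangle
with `b > 1/2` lies in the vertex region of `y 0`, so on it the proximity region is governed by `b`.
Let `U` be the open piece of the triangle with `1/4 < 1 - b < 1/2` and `V` the open piece with
`1 - b < 1 / (4 r)`. For `x ∈ U` and `z ∈ V` one has `z ∈ N(x)`, since `1 - b z < 1/4 < r (1 - b x)`,
whereas `x ∉ N(z)`, since `r (1 - b z) < 1/4 < 1 - b x` (`arc_of_mem`, `not_arc_of_mem`).
Both `U` and `V` are nonempty and open, hence charged by the uniform law, so `U ×ˢ V` is a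
measurable set of positive probability that separates `p_and` from `p`; its mirror image
`V ×ˢ U` separates `p` from `p_or`. Only the measurability of these rectangles is used, not that of
the arc events.
-/

open MeasureTheory ProbabilityTheory Filter Topology
open scoped Classical

noncomputable section

/-- Twice the signed area of the triangle. -/
def area2 (y : Fin 3 → ℝ × ℝ) : ℝ := det2 (y 1 - y 0) (y 2 - y 0)

/-- The affine coordinate of `z` along `y 1 - y 0` in the frame based at `y 0`. -/
def c1 (y : Fin 3 → ℝ × ℝ) (z : ℝ × ℝ) : ℝ := det2 (z - y 0) (y 2 - y 0) / area2 y

/-- The affine coordinate of `z` along `y 2 - y 0` in the frame based at `y 0`. -/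
def c2 (y : Fin 3 → ℝ × ℝ) (z : ℝ × ℝ) : ℝ := det2 (y 1 - y 0) (z - y 0) / area2 y

/-- The open strip, inside the angle of the triangle at `y 0`, where `1 - bary y 0` (which equals
`c1 y + c2 y`) lies strictly between `a` and `b`. For `b ≤ 1` it is contained in the triangle. -/
def strip (y : Fin 3 → ℝ × ℝ) (a b : ℝ) : Set (ℝ × ℝ) :=
  {z | 0 < c1 y z ∧ 0 < c2 y z ∧ a < c1 y z + c2 y z ∧ c1 y z + c2 y z < b}

lemma area2_ne_zero {y : Fin 3 → ℝ × ℝ}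
    (hy : ¬ Collinear ℝ ({y 0, y 1, y 2} : Set (ℝ × ℝ))) : area2 y ≠ 0 := by
  intro h
  apply hy
  by_cases h01 : y 1 = y 0
  · rw [h01]
    simpa using collinear_pair ℝ (y 0) (y 2)
  rw [collinear_iff_of_mem (p₀ := y 0) (by simp)]
  refine ⟨y 1 - y 0, ?_⟩
  have hv : ((y 1).1 - (y 0).1) ^ 2 + ((y 1).2 - (y 0).2) ^ 2 ≠ 0 := by
    intro h0
    apply h01
    ext <;> nlinarith [sq_nonneg ((y 1).1 - (y 0).1), sq_nonneg ((y 1).2 - (y 0).2)]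
  simp only [area2, det2, Prod.fst_sub, Prod.snd_sub] at h
  simp only [Set.mem_insert_iff, Set.mem_singleton_iff, forall_eq_or_imp, forall_eq]
  refine ⟨⟨0, by simp⟩, ⟨1, by simp⟩,
    -- the coefficient is that of the orthogonal projection onto the line through `y 0`, `y 1`
    ⟨(((y 2).1 - (y 0).1) * ((y 1).1 - (y 0).1) + ((y 2).2 - (y 0).2) * ((y 1).2 - (y 0).2)) /
      (((y 1).1 - (y 0).1) ^ 2 + ((y 1).2 - (y 0).2) ^ 2), ?_⟩⟩
  ext
  · simp only [vadd_eq_add, Prod.fst_add, Prod.smul_fst, Prod.fst_sub, smul_eq_mul]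
    field_simp
    linear_combination (-((y 1).2 - (y 0).2)) * h
  · simp only [vadd_eq_add, Prod.snd_add, Prod.smul_snd, Prod.snd_sub, smul_eq_mul]
    field_simp
    linear_combination ((y 1).1 - (y 0).1) * h

lemma one_sub_bary {y : Fin 3 → ℝ × ℝ} (h : area2 y ≠ 0) (z : ℝ × ℝ) :
    1 - bary y 0 z = c1 y z + c2 y z := by
  have h' : det2 (y 0 - y 1) (y 2 - y 1) = -area2 y := by
    simp only [area2, det2, Prod.fst_sub, Prod.snd_sub]; ring
  have e1 : (0 + 1 : Fin 3) = 1 := rfl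
  have e2 : (0 + 2 : Fin 3) = 2 := rfl
  simp only [bary, c1, c2, e1, e2, h']
  field_simp
  simp only [area2, det2, Prod.fst_sub, Prod.snd_sub]
  ring

lemma eq_comb {y : Fin 3 → ℝ × ℝ} (h : area2 y ≠ 0) (z : ℝ × ℝ) :
    z = (1 - c1 y z - c2 y z) • y 0 + c1 y z • y 1 + c2 y z • y 2 := by
  simp only [c1, c2]
  ext
  · simp only [Prod.fst_add, Prod.smul_fst, smul_eq_mul]
    field_simp
    simp only [area2, det2, Prod.fst_sub, Prod.snd_sub]
    ring
  · simp only [Prod.snd_add, Prod.smul_snd, smul_eq_mul]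
    field_simp
    simp only [area2, det2, Prod.fst_sub, Prod.snd_sub]
    ring

lemma comb_mem_convexHull {s : Set (ℝ × ℝ)} {p q w : ℝ × ℝ} (hp : p ∈ s) (hq : q ∈ s) (hw : w ∈ s)
    {a b c : ℝ} (ha : 0 ≤ a) (hb : 0 ≤ b) (hc : 0 ≤ c) (habc : a + b + c = 1) :
    a • p + b • q + c • w ∈ convexHull ℝ s := by
  have := (convex_convexHull ℝ s).sum_mem (t := Finset.univ) (w := ![a, b, c]) (z := ![p, q, w])
    (by intro i _; fin_cases i <;> simpa) (by simpa [Fin.sum_univ_three] using habc)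
    (by intro i _; fin_cases i <;> simp <;> exact subset_convexHull ℝ s ‹_›)
  simpa [Fin.sum_univ_three] using this

lemma strip_subset_triangle {y : Fin 3 → ℝ × ℝ} (h : area2 y ≠ 0) {a b : ℝ} (hb : b ≤ 1 / 2) :
    strip y a b ⊆ triangle y := by
  rintro z ⟨h1, h2, -, h4⟩
  rw [eq_comb h z]
  exact comb_mem_convexHull (by simp) (by simp) (by simp) (by linarith) h1.le h2.le (by ring)

/-- The strip lies in the triangle spanned by `y 0` and the midpoints of the two edges at `y 0`. -/
lemma vtx_eq_zero {y : Fin 3 → ℝ × ℝ} (h : area2 y ≠ 0) {a b : ℝ} (hb : b ≤ 1 / 2)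
    {z : ℝ × ℝ} (hz : z ∈ strip y a b) : vtx y z = 0 := by
  obtain ⟨h1, h2, -, h4⟩ := hz
  have hz : z ∈ vertexRegion y 0 := by
    have key : z = (1 - 2 * c1 y z - 2 * c2 y z) • y 0 + (2 * c1 y z) • midpoint ℝ (y 0) (y 1)
        + (2 * c2 y z) • midpoint ℝ (y 0) (y 2) := by
      conv_lhs => rw [eq_comb h z]
      simp only [midpoint_eq_smul_add, invOf_eq_inv]
      module
    rw [key]
    exact comb_mem_convexHull (by simp) (by simp) (by simp) (by linarith) (by linarith)
      (by linarith) (by ring)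
  simp [vtx, hz]

lemma mem_NPE_iff_s15 {y : Fin 3 → ℝ × ℝ} (h : area2 y ≠ 0) {a b r : ℝ} (hb : b ≤ 1 / 2)
    {x z : ℝ × ℝ} (hx : x ∈ strip y a b) :
    z ∈ NPE y r x ↔ z ∈ triangle y ∧ c1 y z + c2 y z ≤ r * (c1 y x + c2 y x) := by
  have hne : ¬ (x = y 0 ∨ x = y 1 ∨ x = y 2) := by
    obtain ⟨h1, h2, -, h4⟩ := hx
    rintro (rfl | rfl | rfl)
    · simp [c1, det2] at h1
    · simp [c2, det2, mul_comm] at h2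
    · simp [c1, det2, mul_comm] at h1
  rw [NPE, if_neg hne, vtx_eq_zero h hb hx, Set.mem_ofPred_eq, one_sub_bary h, one_sub_bary h]

lemma inv_le_quarter {r : ℝ} (hr : 1 ≤ r) : 1 / (4 * r) ≤ 1 / 4 := by
  apply one_div_le_one_div_of_le <;> linarith

lemma arc_of_mem {y : Fin 3 → ℝ × ℝ} (h : area2 y ≠ 0) {r : ℝ} (hr : 1 ≤ r) {x z : ℝ × ℝ}
    (hx : x ∈ strip y (1 / 4) (1 / 2)) (hz : z ∈ strip y 0 (1 / (4 * r))) : z ∈ NPE y r x := by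
  have hq := inv_le_quarter hr
  rw [mem_NPE_iff_s15 h le_rfl hx]
  refine ⟨strip_subset_triangle h (by linarith) hz, ?_⟩
  obtain ⟨-, -, h3, -⟩ := hx
  obtain ⟨-, -, -, h4⟩ := hz
  nlinarith

lemma not_arc_of_mem {y : Fin 3 → ℝ × ℝ} (h : area2 y ≠ 0) {r : ℝ} (hr : 1 ≤ r) {x z : ℝ × ℝ}
    (hx : x ∈ strip y (1 / 4) (1 / 2)) (hz : z ∈ strip y 0 (1 / (4 * r))) : x ∉ NPE y r z := by
  have hq := inv_le_quarter hr
  rw [mem_NPE_iff_s15 h (by linarith) hz]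
  rintro ⟨-, hle⟩
  obtain ⟨-, -, h3, -⟩ := hx
  obtain ⟨-, -, -, h4⟩ := hz
  rw [lt_div_iff₀ (by linarith)] at h4
  linarith

lemma isOpen_strip (y : Fin 3 → ℝ × ℝ) (a b : ℝ) : IsOpen (strip y a b) := by
  have hc1 : Continuous (c1 y) := by unfold c1 det2; fun_prop
  have hc2 : Continuous (c2 y) := by unfold c2 det2; fun_prop
  exact (isOpen_lt continuous_const hc1).inter ((isOpen_lt continuous_const hc2).inter
    ((isOpen_lt continuous_const (hc1.add hc2)).inter (isOpen_lt (hc1.add hc2) continuous_const)))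

lemma strip_nonempty {y : Fin 3 → ℝ × ℝ} (h : area2 y ≠ 0) {a b : ℝ} (ha : 0 ≤ a) (hab : a < b) :
    (strip y a b).Nonempty := by
  -- a point on the median from `y 0`, with `1 - bary y 0` equal to `(a + b) / 2`
  refine ⟨y 0 + ((a + b) / 4) • ((y 1 - y 0) + (y 2 - y 0)), ?_⟩
  have e1 : c1 y (y 0 + ((a + b) / 4) • ((y 1 - y 0) + (y 2 - y 0))) = (a + b) / 4 := by
    rw [c1, div_eq_iff h]
    simp [area2, det2]
    ring
  have e2 : c2 y (y 0 + ((a + b) / 4) • ((y 1 - y 0) + (y 2 - y 0))) = (a + b) / 4 := by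
    rw [c2, div_eq_iff h]
    simp [area2, det2]
    ring
  simp only [strip, Set.mem_ofPred_eq, e1, e2]
  refine ⟨?_, ?_, ?_, ?_⟩ <;> linarith

lemma volume_triangle_ne_top (y : Fin 3 → ℝ × ℝ) : volume (triangle y) ≠ ⊤ := by
  have : IsCompact (triangle y) := Set.Finite.isCompact_convexHull ℝ (by simp)
  exact this.measure_lt_top.ne

lemma unif_strip_ne_zero {y : Fin 3 → ℝ × ℝ} (h : area2 y ≠ 0) {a b : ℝ} (ha : 0 ≤ a)
    (hab : a < b) (hb : b ≤ 1 / 2) : unif y (strip y a b) ≠ 0 := by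
  rw [unif, Measure.smul_apply, Measure.restrict_apply (isOpen_strip y a b).measurableSet,
    Set.inter_eq_left.2 (strip_subset_triangle h hb), smul_eq_mul]
  exact mul_ne_zero (ENNReal.inv_ne_zero.2 (volume_triangle_ne_top y))
    ((isOpen_strip y a b).measure_pos _ (strip_nonempty h ha hab)).ne'

lemma isFiniteMeasure_unif {y : Fin 3 → ℝ × ℝ} (h : area2 y ≠ 0) : IsFiniteMeasure (unif y) := by
  have hpos : volume (triangle y) ≠ 0 := fun h0 =>
    ((isOpen_strip y 0 (1 / 2)).measure_pos volume
      (strip_nonempty h le_rfl (by norm_num))).ne'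
      (measure_mono_null (strip_subset_triangle h le_rfl) h0)
  refine ⟨?_⟩
  rw [unif, Measure.smul_apply, Measure.restrict_apply_univ, smul_eq_mul]
  exact ENNReal.mul_lt_top (ENNReal.inv_lt_top.2 (pos_iff_ne_zero.2 hpos))
    (volume_triangle_ne_top y).lt_top

/-- A strict form of monotonicity in which only the separating set `E` need be measurable. -/
lemma toReal_lt_of_separated {α : Type*} [MeasurableSpace α] {μ : Measure α} [IsFiniteMeasure μ]
    {A B E : Set α} (hAB : A ⊆ B) (hE : MeasurableSet E) (hEB : E ⊆ B) (hd : Disjoint A E)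
    (h0 : μ E ≠ 0) : (μ A).toReal < (μ B).toReal := by
  rw [ENNReal.toReal_lt_toReal (measure_ne_top _ _) (measure_ne_top _ _)]
  calc μ A < μ A + μ E := ENNReal.lt_add_right (measure_ne_top _ _) h0
    _ = μ (A ∪ E) := (measure_union hd hE).symm
    _ ≤ μ B := measure_mono (Set.union_subset hAB hEB)

/-- for `X_1, X_2` i.i.d. uniform on a triangle and every `r ∈ [1,∞)`,
the edge probability of the reflexivity graph, the arc probability of the
proportional-edge PCD, and the edge probability of the underlying graph are strictly
ordered: `p_and(r) < p(r) < p_or(r)`. -/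
theorem edge_arc_probability_ordering
    (y : Fin 3 → ℝ × ℝ) (hy : ¬ Collinear ℝ ({y 0, y 1, y 2} : Set (ℝ × ℝ)))
    (r : ℝ) (hr : 1 ≤ r) :
    let μ2 := (unif y).prod (unif y)
    let pand : ℝ :=
      (μ2 {q : (ℝ × ℝ) × (ℝ × ℝ) | q.2 ∈ NPE y r q.1 ∧ q.1 ∈ NPE y r q.2}).toReal
    let p : ℝ := (μ2 {q : (ℝ × ℝ) × (ℝ × ℝ) | q.2 ∈ NPE y r q.1}).toReal
    let por : ℝ :=
      (μ2 {q : (ℝ × ℝ) × (ℝ × ℝ) | q.2 ∈ NPE y r q.1 ∨ q.1 ∈ NPE y r q.2}).toReal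
    pand < p ∧ p < por := by
  have h := area2_ne_zero hy
  have hq := inv_le_quarter hr
  have := isFiniteMeasure_unif h
  have hU : unif y (strip y (1 / 4) (1 / 2)) ≠ 0 :=
    unif_strip_ne_zero h (by norm_num) (by norm_num) le_rfl
  have hV : unif y (strip y 0 (1 / (4 * r))) ≠ 0 :=
    unif_strip_ne_zero h le_rfl (by positivity) (by linarith)
  have mU := (isOpen_strip y (1 / 4) (1 / 2)).measurableSet
  have mV := (isOpen_strip y 0 (1 / (4 * r))).measurableSet
  intro μ2 pand p por
  constructor
  · refine toReal_lt_of_separated (E := strip y (1 / 4) (1 / 2) ×ˢ strip y 0 (1 / (4 * r)))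
      (fun q hq => hq.1) (mU.prod mV) (fun q hq => arc_of_mem h hr hq.1 hq.2) ?_ ?_
    · exact Set.disjoint_left.2 fun q hA hE => not_arc_of_mem h hr hE.1 hE.2 hA.2
    · rw [Measure.prod_prod]
      exact mul_ne_zero hU hV
  · refine toReal_lt_of_separated (E := strip y 0 (1 / (4 * r)) ×ˢ strip y (1 / 4) (1 / 2))
      (fun q hq => Or.inl hq) (mV.prod mU) (fun q hq => Or.inr (arc_of_mem h hr hq.2 hq.1)) ?_ ?_
    · exact Set.disjoint_left.2 fun q hA hE => not_arc_of_mem h hr hE.2 hE.1 hA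
    · rw [Measure.prod_prod]
      exact mul_ne_zero hV hU

end
end
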